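/- Let α, β ≥ −1/2 and let i, j ≥ 0 be real numbers. Define the Lebesgue constant Λ_n := sup_{x ∈ [−1,1]} (1−x)^{i/2}(1+x)^{j/2} ∫_{−1}^{1} |k_n(J_{i,j} w_{α,β}; x, y)| (1−y)^{i/2}(1+y)^{j/2} w_{α,β}(y) dy (which equals the operator norm of s_n^{(α,β),i,j} := s_n^{i,j}(w_{α,β}; ·) on C[−1,1] and also its operator norm on L¹(w_{α,β})). If max{α,β} > −1/2, then there is a constant c with Λ_n ≤ c · n^{max{α,β}+1/2} for all n ≥ 1; if max{α,β} = −1/2 (i.e. α = β = −1/2), then there is a constant c with Λ_n ≤ c · log n for all n ≥ 2. -/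

import Mathlib

open MeasureTheory Real Set Filter
open scoped ENNReal

noncomputable section

/-- The parabolic-type domain `Ω`, the image of the triangle `-1 < x < y < 1`
under `(x, y) ↦ (x + y, x y)`. -/
def omegaDom : Set (ℝ × ℝ) :=
  {q | ∃ x y : ℝ, -1 < x ∧ x < y ∧ y < 1 ∧ q = (x + y, x * y)}

/-- The square `[-1,1]²`. -/
def sqDom : Set (ℝ × ℝ) := Icc (-1 : ℝ) 1 ×ˢ Icc (-1 : ℝ) 1

/-- The open triangle `-1 < x < y < 1`. -/
def triDom : Set (ℝ × ℝ) := {q | -1 < q.1 ∧ q.1 < q.2 ∧ q.2 < 1}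

/-- The smaller root `x(u,v)` of `t² - u t + v = 0`. -/
def xRoot (q : ℝ × ℝ) : ℝ := (q.1 - Real.sqrt (q.1 ^ 2 - 4 * q.2)) / 2

/-- The larger root `y(u,v)` of `t² - u t + v = 0`. -/
def yRoot (q : ℝ × ℝ) : ℝ := (q.1 + Real.sqrt (q.1 ^ 2 - 4 * q.2)) / 2

/-- Evaluation of a two-variable polynomial at a point of `ℝ²`. -/
def evalP (P : MvPolynomial (Fin 2) ℝ) (q : ℝ × ℝ) : ℝ :=
  MvPolynomial.eval ![q.1, q.2] P

/-- The space `V_n(W)` of orthogonal polynomials of degree `n` for the weight `W`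
on the domain `D`: polynomials of exact total degree `n` orthogonal to all
polynomials of lower degree. -/
def Vpoly (D : Set (ℝ × ℝ)) (W : ℝ × ℝ → ℝ) (n : ℕ) : Set (MvPolynomial (Fin 2) ℝ) :=
  {P | P.totalDegree = n ∧ ∀ Q : MvPolynomial (Fin 2) ℝ, Q.totalDegree < n →
    (∫ q in D, evalP P q * evalP Q q * W q) = 0}

/-- `Q 0, …, Q n` is an orthonormal basis of `V_n(W)` on `D`. -/
def isONBVn (D : Set (ℝ × ℝ)) (W : ℝ × ℝ → ℝ) (n : ℕ)
    (Q : ℕ → MvPolynomial (Fin 2) ℝ) : Prop :=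
  (∀ k, k ≤ n → Q k ∈ Vpoly D W n) ∧
  (∀ k, k ≤ n → ∀ j, j ≤ n →
    (∫ q in D, evalP (Q k) q * evalP (Q j) q * W q) = if k = j then 1 else 0) ∧
  (∀ R ∈ Vpoly D W n, R ∈ Submodule.span ℝ (Q '' Set.Iic n))

/-- `K` is the reproducing kernel of `Π_n²` in `L²(W)` on the domain `D`:
it is a polynomial function, for each fixed `x ∈ D` it is a polynomial of total
degree `≤ n` in the second variable, and it reproduces every polynomial of total
degree `≤ n`. -/
def IsRK (D : Set (ℝ × ℝ)) (W : ℝ × ℝ → ℝ) (n : ℕ) (K : ℝ × ℝ → ℝ × ℝ → ℝ) : Prop :=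
  (∃ KP : MvPolynomial (Fin 4) ℝ,
    ∀ x y : ℝ × ℝ, K x y = MvPolynomial.eval ![x.1, x.2, y.1, y.2] KP) ∧
  (∀ x ∈ D, ∃ P : MvPolynomial (Fin 2) ℝ, P.totalDegree ≤ n ∧ ∀ y, K x y = evalP P y) ∧
  (∀ P : MvPolynomial (Fin 2) ℝ, P.totalDegree ≤ n →
    ∀ x ∈ D, (∫ y in D, K x y * evalP P y * W y) = evalP P x)

/-- `p` is the sequence of orthonormal polynomials with respect to the weight `w`
on `[-1,1]`: `p n` has degree exactly `n`, positive leading coefficient, and the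
`p n` are orthonormal in `L²(w)`. -/
def IsONPS (w : ℝ → ℝ) (p : ℕ → Polynomial ℝ) : Prop :=
  (∀ n, (p n).natDegree = n) ∧ (∀ n, 0 < (p n).leadingCoeff) ∧
  (∀ n m, (∫ x in Icc (-1:ℝ) 1, (p n).eval x * (p m).eval x * w x)
    = if n = m then 1 else 0)

/-- The Christoffel–Darboux kernel `k_n(x,y) = ∑_{j=0}^n p_j(x) p_j(y)`. -/
def CDK (p : ℕ → Polynomial ℝ) (n : ℕ) (x y : ℝ) : ℝ :=
  ∑ j ∈ Finset.range (n + 1), (p j).eval x * (p j).eval y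

/-- The Jacobi factor `J_{a,b}(x) = (1-x)^a (1+x)^b`. -/
def Jw (a b : ℝ) (x : ℝ) : ℝ := (1 - x) ^ a * (1 + x) ^ b

/-- The factor `J*_{a,b}(u,v) = (1-u+v)^a (1+u+v)^b` on `Ω`. -/
def JstarW (a b : ℝ) (q : ℝ × ℝ) : ℝ := (1 - q.1 + q.2) ^ a * (1 + q.1 + q.2) ^ b

/-- Modulus of continuity of `ψ` on `[-1,1]`. -/
def modCont (ψ : ℝ → ℝ) (t : ℝ) : ℝ :=
  sSup {d : ℝ | ∃ x ∈ Icc (-1:ℝ) 1, ∃ y ∈ Icc (-1:ℝ) 1, |x - y| ≤ t ∧ d = |ψ x - ψ y|}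

/-- The generalized Jacobi class `GJ`. -/
def IsGJ (w : ℝ → ℝ) : Prop :=
  ∃ (r : ℕ) (ψ : ℝ → ℝ) (γ₀ γ₁ : ℝ) (γs xs : Fin r → ℝ),
    -1 < γ₀ ∧ -1 < γ₁ ∧ (∀ i, -1 < γs i) ∧
    StrictMono xs ∧ (∀ i, xs i ∈ Ioo (-1:ℝ) 1) ∧
    ContinuousOn ψ (Icc (-1:ℝ) 1) ∧ (∀ x ∈ Icc (-1:ℝ) 1, 0 < ψ x) ∧
    IntegrableOn (fun t => modCont ψ t / t) (Ioc (0:ℝ) 1) ∧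
    (∀ x : ℝ, |x| ≤ 1 → w x = ψ x * (1 - x) ^ γ₀ * (1 + x) ^ γ₁ * ∏ i, |x - xs i| ^ γs i) ∧
    (∀ x : ℝ, 1 < |x| → w x = 0)

/-- The `L^p`-norm `‖f‖_{w,e}` on `[-1,1]` (as an extended nonnegative real). -/
def lpnormI (w : ℝ → ℝ) (e : ℝ) (f : ℝ → ℝ) : ℝ≥0∞ :=
  (∫⁻ x in Icc (-1:ℝ) 1, ENNReal.ofReal (|f x| ^ e * w x)) ^ (1 / e)

/-- The `L^p`-norm `‖f‖_{W,e}` on a planar domain `D` (as an extended nonnegative real). -/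
def lpnormD (D : Set (ℝ × ℝ)) (W : ℝ × ℝ → ℝ) (e : ℝ) (f : ℝ × ℝ → ℝ) : ℝ≥0∞ :=
  (∫⁻ q in D, ENNReal.ofReal (|f q| ^ e * W q)) ^ (1 / e)

/-- The operator `s_n^{i,j}(w; f, x)` built from the Christoffel–Darboux kernel of the
orthonormal polynomials `pij` of the weight `J_{i,j} w`. -/
def snOp (w : ℝ → ℝ) (pij : ℕ → Polynomial ℝ) (i j : ℝ) (n : ℕ) (f : ℝ → ℝ) (x : ℝ) : ℝ :=
  Jw (i/2) (j/2) x * ∫ y in Icc (-1:ℝ) 1, f y * CDK pij n x y * Jw (i/2) (j/2) y * w y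

/-- Substitution `(x, y) ↦ (2 x y, x² + y² - 1)` on two-variable polynomials. -/
def quadSub (P : MvPolynomial (Fin 2) ℝ) : MvPolynomial (Fin 2) ℝ :=
  MvPolynomial.aeval
    ![2 * MvPolynomial.X 0 * MvPolynomial.X 1,
      MvPolynomial.X 0 ^ 2 + MvPolynomial.X 1 ^ 2 - 1] P

/-- A one-variable polynomial viewed as a polynomial in the first variable. -/
def polyX (q : Polynomial ℝ) : MvPolynomial (Fin 2) ℝ :=
  Polynomial.aeval (MvPolynomial.X 0) q

/-- A one-variable polynomial viewed as a polynomial in the second variable. -/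
def polyY (q : Polynomial ℝ) : MvPolynomial (Fin 2) ℝ :=
  Polynomial.aeval (MvPolynomial.X 1) q

/-!
Fix `w = J_{c,d}` with `c = α + i`, `d = β + j`, and let `q_n` be the orthonormal polynomials for
the Christoffel transform `(1 - x) w`. The Christoffel–Darboux kernel satisfies
`(x - y) k_n(x, y) = a_n ((1 - y) p_n(x) q_n(y) - (1 - x) q_n(x) p_n(y))` with bounded `a_n`, so
off-diagonal kernel bounds reduce to pointwise bounds on orthonormal Jacobi polynomials. These
come from the Sonin function `λ p² + (1 - x²) p'²`: a Grönwall argument controls it where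
`p_n` oscillates, and where `n² (1 - x)` is bounded the differential equation keeps `p_n` of the
size it has at the edge of that region. The outcome is
`|p_n(x)| ≲ (√(1 - x) + 1/n)^(-c - 1/2)` on `[0, 1]`.

With `y = cos φ`, `x = cos θ ≥ 0` and `δ = α + 1/2`, the Lebesgue function is then at most a
constant times `n^δ ∫ (1/n + |φ - θ|)^(δ - 1) dφ`, which is of order `n^δ` if `δ > 0` and of order
`log n` if `δ = 0`. Points `x < 0` are handled by the reflection `x ↦ -x`, which swaps `α` and `β`.
-/

section OrthonormalPolynomials

open Polynomial

/-- Orthonormal polynomials for a moment functional `L`. In contrast to `IsONPS`, the signs of the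
leading coefficients are not prescribed, so the notion is stable under reflection. -/
structure IsOrthonormalSeq (L : ℝ[X] →ₗ[ℝ] ℝ) (p : ℕ → ℝ[X]) : Prop where
  natDegree_eq : ∀ n, (p n).natDegree = n
  apply_mul : ∀ n m, L (p n * p m) = if n = m then 1 else 0

/-- The off-diagonal entry `aₙ` of the Jacobi matrix, that is, the coefficient of `pₙ₊₁` in
`x pₙ`. -/
def recurrenceCoeff (L : ℝ[X] →ₗ[ℝ] ℝ) (p : ℕ → ℝ[X]) (n : ℕ) : ℝ :=
  L (X * p n * p (n + 1))

/-- The Christoffel transform of a moment functional: `L` with the extra weight factor `a - x`. -/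
def christoffelTransform (L : ℝ[X] →ₗ[ℝ] ℝ) (a : ℝ) : ℝ[X] →ₗ[ℝ] ℝ :=
  L ∘ₗ LinearMap.mulLeft ℝ (C a - X)

/-- The kernel polynomial `x ↦ kₙ(x, a)`. -/
def kernelPoly (p : ℕ → ℝ[X]) (n : ℕ) (a : ℝ) : ℝ[X] :=
  ∑ k ∈ Finset.range (n + 1), (p k).eval a • p k

lemma CDK_succ (p : ℕ → ℝ[X]) (n : ℕ) (x y : ℝ) :
    CDK p (n + 1) x y = CDK p n x y + (p (n + 1)).eval x * (p (n + 1)).eval y :=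
  Finset.sum_range_succ _ _

lemma eval_kernelPoly (p : ℕ → ℝ[X]) (n : ℕ) (a x : ℝ) :
    (kernelPoly p n a).eval x = CDK p n a x := by
  simp only [kernelPoly, CDK, eval_finsetSum, eval_smul, smul_eq_mul]

lemma christoffelTransform_apply (L : ℝ[X] →ₗ[ℝ] ℝ) (a : ℝ) (f : ℝ[X]) :
    christoffelTransform L a f = L ((C a - X) * f) := rfl

namespace IsOrthonormalSeq

variable {L : ℝ[X] →ₗ[ℝ] ℝ} {p : ℕ → ℝ[X]}

lemma ne_zero (hp : IsOrthonormalSeq L p) (n : ℕ) : p n ≠ 0 := by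
  intro h
  simpa [h] using hp.apply_mul n n

lemma span_eq_degreeLE (hp : IsOrthonormalSeq L p) (n : ℕ) :
    Submodule.span ℝ (p '' Iic n) = degreeLE ℝ n :=
  let S : Polynomial.Sequence ℝ :=
    ⟨p, fun k => by rw [degree_eq_natDegree (hp.ne_zero k), hp.natDegree_eq]⟩
  S.span_degreeLE fun k _ => (leadingCoeff_ne_zero.mpr (S.ne_zero k)).isUnit

lemma sum_apply_mul_smul (hp : IsOrthonormalSeq L p) {f : ℝ[X]} {n : ℕ}
    (hf : f.natDegree ≤ n) : ∑ k ∈ Finset.range (n + 1), L (f * p k) • p k = f := by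
  have hmem : f ∈ Submodule.span ℝ (p '' Iic n) := by
    rw [hp.span_eq_degreeLE, mem_degreeLE]
    exact natDegree_le_iff_degree_le.mp hf
  clear hf
  induction hmem using Submodule.span_induction with
  | mem _ h =>
    obtain ⟨k, hk, rfl⟩ := h
    simp only [hp.apply_mul, ite_smul, one_smul, zero_smul, Finset.sum_ite_eq, Finset.mem_range]
    exact if_pos (Nat.lt_succ_of_le hk)
  | zero => simp
  | add g h _ _ hg hh => simp only [add_mul, map_add, add_smul, Finset.sum_add_distrib, hg, hh]
  | smul t g _ hg =>
    simp only [smul_mul_assoc, map_smul, smul_eq_mul, mul_smul, ← Finset.smul_sum, hg]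

lemma apply_mul_eq_zero (hp : IsOrthonormalSeq L p) {f : ℝ[X]} {n : ℕ} (hf : f.natDegree < n) :
    L (f * p n) = 0 := by
  rw [← hp.sum_apply_mul_smul (le_refl f.natDegree), Finset.sum_mul, map_sum]
  refine Finset.sum_eq_zero fun k hk => ?_
  have hkn : k ≠ n := by
    rintro rfl
    exact absurd (Finset.mem_range.mp hk) (by omega)
  rw [smul_mul_assoc, map_smul, hp.apply_mul, if_neg hkn, smul_zero]

lemma apply_sq (hp : IsOrthonormalSeq L p) (f : ℝ[X]) :
    L (f * f) = ∑ k ∈ Finset.range (f.natDegree + 1), L (f * p k) ^ 2 := by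
  nth_rw 2 [← hp.sum_apply_mul_smul (le_refl f.natDegree)]
  simp only [Finset.mul_sum, map_sum, mul_smul_comm, map_smul, smul_eq_mul, sq]

lemma eq_zero_of_apply_sq_eq_zero (hp : IsOrthonormalSeq L p) {f : ℝ[X]} (hf : L (f * f) = 0) :
    f = 0 := by
  rw [hp.apply_sq, Finset.sum_eq_zero_iff_of_nonneg fun _ _ => sq_nonneg _] at hf
  rw [← hp.sum_apply_mul_smul (le_refl f.natDegree)]
  exact Finset.sum_eq_zero fun k hk => by
    rw [pow_eq_zero_iff two_ne_zero |>.mp (hf k hk), zero_smul]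

lemma apply_kernelPoly_mul (hp : IsOrthonormalSeq L p) {f : ℝ[X]} {n : ℕ} (hf : f.natDegree ≤ n)
    (a : ℝ) : L (kernelPoly p n a * f) = f.eval a := by
  conv_rhs => rw [← hp.sum_apply_mul_smul hf]
  simp only [kernelPoly, Finset.sum_mul, map_sum, smul_mul_assoc, map_smul, smul_eq_mul,
    eval_finsetSum, eval_smul]
  exact Finset.sum_congr rfl fun k _ => by rw [mul_comm, mul_comm (p k)]

lemma natDegree_X_mul (hp : IsOrthonormalSeq L p) (n : ℕ) : (X * p n).natDegree = n + 1 := by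
  rw [Polynomial.natDegree_X_mul (hp.ne_zero n), hp.natDegree_eq]

lemma X_mul_zero (hp : IsOrthonormalSeq L p) :
    X * p 0 = recurrenceCoeff L p 0 • p 1 + L (X * p 0 * p 0) • p 0 := by
  conv_lhs => rw [← hp.sum_apply_mul_smul (hp.natDegree_X_mul 0).le]
  rw [Finset.sum_range_succ, Finset.sum_range_one, add_comm, recurrenceCoeff]

lemma X_mul_succ (hp : IsOrthonormalSeq L p) (n : ℕ) :
    X * p (n + 1) = recurrenceCoeff L p (n + 1) • p (n + 2)
      + L (X * p (n + 1) * p (n + 1)) • p (n + 1) + recurrenceCoeff L p n • p n := by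
  have hvanish : ∑ k ∈ Finset.range n, L (X * p (n + 1) * p k) • p k = 0 := by
    refine Finset.sum_eq_zero fun k hk => ?_
    have hdeg : (X * p k).natDegree < n + 1 := by
      rw [hp.natDegree_X_mul]
      exact Nat.succ_lt_succ (Finset.mem_range.mp hk)
    rw [mul_right_comm, hp.apply_mul_eq_zero hdeg, zero_smul]
  conv_lhs => rw [← hp.sum_apply_mul_smul (hp.natDegree_X_mul (n + 1)).le]
  rw [Finset.sum_range_succ, Finset.sum_range_succ, Finset.sum_range_succ, hvanish,
    mul_right_comm X (p (n + 1)) (p n)]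
  simp only [recurrenceCoeff]
  abel

theorem christoffel_darboux (hp : IsOrthonormalSeq L p) (n : ℕ) (x y : ℝ) :
    (x - y) * CDK p n x y = recurrenceCoeff L p n *
      ((p (n + 1)).eval x * (p n).eval y - (p n).eval x * (p (n + 1)).eval y) := by
  induction n with
  | zero =>
    have hrec (z : ℝ) := congrArg (eval z) hp.X_mul_zero
    simp only [eval_mul, eval_X, eval_add, eval_smul, smul_eq_mul] at hrec
    simp only [CDK, zero_add, Finset.sum_range_one]
    linear_combination (p 0).eval y * hrec x - (p 0).eval x * hrec y
  | succ n ih =>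
    have hrec (z : ℝ) := congrArg (eval z) (hp.X_mul_succ n)
    simp only [eval_mul, eval_X, eval_add, eval_smul, smul_eq_mul] at hrec
    rw [CDK_succ]
    linear_combination ih + (p (n + 1)).eval y * hrec x - (p (n + 1)).eval x * hrec y

lemma eval_mul_CDK (hp : IsOrthonormalSeq L p) (n : ℕ) (a x y : ℝ) :
    (p n).eval a * ((x - y) * CDK p n x y) =
      (p n).eval x * ((a - y) * CDK p n a y) - (p n).eval y * ((a - x) * CDK p n a x) := by
  rw [hp.christoffel_darboux, hp.christoffel_darboux, hp.christoffel_darboux]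
  ring

lemma C_sub_X_mul_kernelPoly (hp : IsOrthonormalSeq L p) (n : ℕ) (a : ℝ) :
    (C a - X) * kernelPoly p n a =
      recurrenceCoeff L p n • ((p (n + 1)).eval a • p n - (p n).eval a • p (n + 1)) := by
  refine Polynomial.funext fun x => ?_
  simp only [eval_mul, eval_sub, eval_C, eval_X, eval_smul, smul_eq_mul, eval_kernelPoly,
    hp.christoffel_darboux]

lemma apply_sq_eq_zero_of_christoffelTransform {a : ℝ}
    (hpos : ∀ f, 0 ≤ christoffelTransform L a (f * f)) {f : ℝ[X]}
    (hf : christoffelTransform L a (f * f) = 0) :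
    L (((C a - X) * f) * ((C a - X) * f)) = 0 := by
  set g := (C a - X) * f
  -- Cauchy–Schwarz for the semidefinite form `(f, g) ↦ L ((a - x) f g)`
  have hquad (t : ℝ) : 0 ≤ christoffelTransform L a (g * g) * (t * t) + 2 * L (g * g) * t + 0 := by
    have hexpand : christoffelTransform L a ((f + t • g) * (f + t • g)) =
        christoffelTransform L a (f * f) + t * (2 * christoffelTransform L a (f * g))
          + t * t * christoffelTransform L a (g * g) := by
      simp only [mul_add, add_mul, smul_mul_assoc, mul_smul_comm, map_add, map_smul, smul_eq_mul,
        mul_comm g f]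
      ring
    have hcross : christoffelTransform L a (f * g) = L (g * g) := by
      rw [christoffelTransform_apply, ← mul_assoc]
    have := hpos (f + t • g)
    rw [hexpand, hf, hcross] at this
    linarith
  have hdisc := discrim_le_zero hquad
  rw [discrim, mul_zero, sub_zero] at hdisc
  have := sq_nonneg (2 * L (g * g))
  nlinarith

lemma christoffelTransform_sq_pos (hp : IsOrthonormalSeq L p) {a : ℝ}
    (hpos : ∀ f, 0 ≤ christoffelTransform L a (f * f)) {f : ℝ[X]} (hf : f ≠ 0) :
    0 < christoffelTransform L a (f * f) := by
  refine (hpos f).lt_of_ne fun h => ?_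
  have := hp.eq_zero_of_apply_sq_eq_zero (apply_sq_eq_zero_of_christoffelTransform hpos h.symm)
  have hX : (C a - X : ℝ[X]) ≠ 0 := fun h => X_sub_C_ne_zero a (by rw [← neg_sub, h, neg_zero])
  exact hf ((mul_eq_zero.mp this).resolve_left hX)

lemma kernelPoly_ne_zero (hp : IsOrthonormalSeq L p) (n : ℕ) (a : ℝ) : kernelPoly p n a ≠ 0 := by
  intro h
  simpa [h] using hp.apply_kernelPoly_mul (f := 1) (n := n) (by simp) a

lemma natDegree_kernelPoly_le (hp : IsOrthonormalSeq L p) (n : ℕ) (a : ℝ) :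
    (kernelPoly p n a).natDegree ≤ n :=
  natDegree_sum_le_of_forall_le _ _ fun k hk =>
    (natDegree_smul_le _ _).trans <| (hp.natDegree_eq k).trans_le <|
      Nat.lt_succ_iff.mp (Finset.mem_range.mp hk)

lemma christoffelTransform_kernelPoly_mul_eq_zero (hp : IsOrthonormalSeq L p) {f : ℝ[X]} {n : ℕ}
    (hf : f.natDegree < n) (a : ℝ) : christoffelTransform L a (kernelPoly p n a * f) = 0 := by
  have hdeg : ((C a - X) * f).natDegree ≤ n := by
    refine natDegree_mul_le.trans ?_
    have : (C a - X : ℝ[X]).natDegree ≤ 1 := by compute_degree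
    omega
  rw [christoffelTransform_apply, mul_left_comm, hp.apply_kernelPoly_mul hdeg]
  simp

lemma christoffelTransform_kernelPoly_mul_self (hp : IsOrthonormalSeq L p) (n : ℕ) (a : ℝ) :
    christoffelTransform L a (kernelPoly p n a * kernelPoly p n a) =
      (p n).eval a * christoffelTransform L a (kernelPoly p n a * p n) := by
  have hself : L (p n * kernelPoly p n a) = (p n).eval a := by
    rw [mul_comm, hp.apply_kernelPoly_mul (hp.natDegree_eq n).le]
  have hnext : L (p (n + 1) * kernelPoly p n a) = 0 := by
    rw [mul_comm, hp.apply_mul_eq_zero (Nat.lt_succ_of_le (hp.natDegree_kernelPoly_le n a))]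
  simp only [christoffelTransform_apply, ← mul_assoc, hp.C_sub_X_mul_kernelPoly, sub_mul,
    smul_mul_assoc, map_smul, map_sub, hself, hnext, hp.apply_mul, smul_eq_mul]
  simp only [if_true, Nat.succ_ne_self, if_false]
  ring

end IsOrthonormalSeq

/-- The orthonormal polynomials of the Christoffel transform of `L` at `a`. -/
def christoffelSeq (L : ℝ[X] →ₗ[ℝ] ℝ) (p : ℕ → ℝ[X]) (a : ℝ) (n : ℕ) : ℝ[X] :=
  (√(christoffelTransform L a (kernelPoly p n a * kernelPoly p n a)))⁻¹ • kernelPoly p n a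

namespace IsOrthonormalSeq

variable {L : ℝ[X] →ₗ[ℝ] ℝ} {p : ℕ → ℝ[X]} {a : ℝ}

lemma christoffelTransform_kernelPoly_sq_pos (hp : IsOrthonormalSeq L p)
    (hpos : ∀ f, 0 ≤ christoffelTransform L a (f * f)) (n : ℕ) :
    0 < christoffelTransform L a (kernelPoly p n a * kernelPoly p n a) :=
  hp.christoffelTransform_sq_pos hpos (hp.kernelPoly_ne_zero n a)

lemma eval_ne_zero (hp : IsOrthonormalSeq L p)
    (hpos : ∀ f, 0 ≤ christoffelTransform L a (f * f)) (n : ℕ) : (p n).eval a ≠ 0 := by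
  intro h
  have := hp.christoffelTransform_kernelPoly_sq_pos hpos n
  rw [hp.christoffelTransform_kernelPoly_mul_self, h, zero_mul] at this
  exact this.false

lemma natDegree_kernelPoly (hp : IsOrthonormalSeq L p)
    (hpos : ∀ f, 0 ≤ christoffelTransform L a (f * f)) (n : ℕ) :
    (kernelPoly p n a).natDegree = n := by
  refine (hp.natDegree_kernelPoly_le n a).antisymm (not_lt.mp fun h => ?_)
  exact (hp.christoffelTransform_kernelPoly_sq_pos hpos n).ne'
    (hp.christoffelTransform_kernelPoly_mul_eq_zero h a)

theorem christoffel (hp : IsOrthonormalSeq L p)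
    (hpos : ∀ f, 0 ≤ christoffelTransform L a (f * f)) :
    IsOrthonormalSeq (christoffelTransform L a) (christoffelSeq L p a) := by
  have hN (n : ℕ) := hp.christoffelTransform_kernelPoly_sq_pos hpos n
  have hlt {n m : ℕ} (h : m < n) :
      christoffelTransform L a (kernelPoly p n a * kernelPoly p m a) = 0 :=
    hp.christoffelTransform_kernelPoly_mul_eq_zero ((hp.natDegree_kernelPoly_le m a).trans_lt h) a
  refine ⟨fun n => ?_, fun n m => ?_⟩
  · rw [christoffelSeq, natDegree_smul _ (inv_ne_zero (sqrt_pos.mpr (hN n)).ne'),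
      hp.natDegree_kernelPoly hpos]
  · simp only [christoffelSeq, smul_mul_assoc, mul_smul_comm, map_smul, smul_eq_mul]
    split_ifs with h
    · subst h
      field_simp [(sqrt_pos.mpr (hN n)).ne']
      exact (sq_sqrt (hN n).le).symm
    · rcases lt_or_gt_of_ne h with h | h
      · rw [mul_comm (kernelPoly p n a) (kernelPoly p m a), hlt h, mul_zero, mul_zero]
      · rw [hlt h, mul_zero, mul_zero]

lemma christoffelTransform_kernelPoly_sq_le (hp : IsOrthonormalSeq L p)
    (hpos : ∀ f, 0 ≤ christoffelTransform L a (f * f)) {n : ℕ} {B : ℝ}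
    (hB : christoffelTransform L a (p n * p n) ≤ B) :
    christoffelTransform L a (kernelPoly p n a * kernelPoly p n a) ≤ B * (p n).eval a ^ 2 := by
  have hdiff := hpos (kernelPoly p n a - (p n).eval a • p n)
  simp only [mul_sub, sub_mul, smul_mul_assoc, mul_smul_comm, map_sub, map_smul, smul_eq_mul,
    mul_comm (p n) (kernelPoly p n a), ← hp.christoffelTransform_kernelPoly_mul_self] at hdiff
  nlinarith [mul_le_mul_of_nonneg_left hB (sq_nonneg ((p n).eval a))]

theorem abs_sub_mul_abs_CDK_le (hp : IsOrthonormalSeq L p)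
    (hpos : ∀ f, 0 ≤ christoffelTransform L a (f * f)) {n : ℕ} {B : ℝ}
    (hB : christoffelTransform L a (p n * p n) ≤ B) {x y : ℝ} (hx : x ≤ a) (hy : y ≤ a) :
    |x - y| * |CDK p n x y| ≤
      √B * (|(p n).eval x| * ((a - y) * |(christoffelSeq L p a n).eval y|)
        + |(p n).eval y| * ((a - x) * |(christoffelSeq L p a n).eval x|)) := by
  set N := christoffelTransform L a (kernelPoly p n a * kernelPoly p n a) with hNdef
  have hNpos : 0 < √N := sqrt_pos.mpr (hp.christoffelTransform_kernelPoly_sq_pos hpos n)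
  have hkernel (z : ℝ) : CDK p n a z = √N * (christoffelSeq L p a n).eval z := by
    rw [christoffelSeq, eval_smul, eval_kernelPoly, smul_eq_mul, ← hNdef,
      mul_inv_cancel_left₀ hNpos.ne']
  have hNle : √N ≤ √B * |(p n).eval a| := by
    rw [← sqrt_sq_eq_abs, ← sqrt_mul' _ (sq_nonneg _)]
    exact sqrt_le_sqrt (hp.christoffelTransform_kernelPoly_sq_le hpos hB)
  refine le_of_mul_le_mul_left ?_ (abs_pos.mpr (hp.eval_ne_zero hpos n))
  calc |(p n).eval a| * (|x - y| * |CDK p n x y|)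
      = |(p n).eval x * ((a - y) * CDK p n a y) - (p n).eval y * ((a - x) * CDK p n a x)| := by
        rw [← hp.eval_mul_CDK, abs_mul, abs_mul]
    _ ≤ √N * (|(p n).eval x| * ((a - y) * |(christoffelSeq L p a n).eval y|)
        + |(p n).eval y| * ((a - x) * |(christoffelSeq L p a n).eval x|)) := by
        refine (abs_sub _ _).trans_eq ?_
        simp only [hkernel, abs_mul, abs_of_nonneg (sub_nonneg.mpr hx),
          abs_of_nonneg (sub_nonneg.mpr hy), abs_of_pos hNpos]
        ring
    _ ≤ √B * |(p n).eval a| * (|(p n).eval x| * ((a - y) * |(christoffelSeq L p a n).eval y|)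
        + |(p n).eval y| * ((a - x) * |(christoffelSeq L p a n).eval x|)) := by
        have := sub_nonneg.mpr hx
        have := sub_nonneg.mpr hy
        gcongr
    _ = _ := by ring

end IsOrthonormalSeq

end OrthonormalPolynomials

section JacobiWeight

lemma Jw_nonneg {c d x : ℝ} (hx : x ∈ Icc (-1 : ℝ) 1) : 0 ≤ Jw c d x :=
  mul_nonneg (rpow_nonneg (by linarith [hx.2]) _) (rpow_nonneg (by linarith [hx.1]) _)

lemma Jw_neg (c d x : ℝ) : Jw c d (-x) = Jw d c x := by
  rw [Jw, Jw, sub_neg_eq_add, ← sub_eq_add_neg, mul_comm]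

lemma Jw_mul_Jw {x : ℝ} (hx : x ∈ Ioo (-1 : ℝ) 1) (a b c d : ℝ) :
    Jw a b x * Jw c d x = Jw (a + c) (b + d) x := by
  have h1 : 0 < 1 - x := by linarith [hx.2]
  have h2 : 0 < 1 + x := by linarith [hx.1]
  rw [Jw, Jw, Jw, rpow_add h1, rpow_add h2]
  ring

lemma Jw_add_one_left {c x : ℝ} (d : ℝ) (hc : -1 < c) (hx : x ∈ Icc (-1 : ℝ) 1) :
    Jw (c + 1) d x = (1 - x) * Jw c d x := by
  rw [Jw, Jw, rpow_add_one' (by linarith [hx.2]) (by linarith)]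
  ring

lemma Jw_add_one_add_one {x : ℝ} (c d : ℝ) (hx : x ∈ Ioo (-1 : ℝ) 1) :
    Jw (c + 1) (d + 1) x = (1 - x ^ 2) * Jw c d x := by
  rw [← Jw_mul_Jw hx, mul_comm, Jw, rpow_one, rpow_one]
  ring

lemma hasDerivAt_Jw {x : ℝ} (c d : ℝ) (hx : x ∈ Ioo (-1 : ℝ) 1) :
    HasDerivAt (Jw c d) (Jw c d x * (d / (1 + x) - c / (1 - x))) x := by
  have h1 : 0 < 1 - x := by linarith [hx.2]
  have h2 : 0 < 1 + x := by linarith [hx.1]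
  have hleft := ((hasDerivAt_id x).const_sub 1).rpow_const (p := c) (Or.inl h1.ne')
  have hright := ((hasDerivAt_id x).const_add 1).rpow_const (p := d) (Or.inl h2.ne')
  refine (hleft.mul hright).congr_deriv ?_
  simp only [id, Jw, rpow_sub_one h1.ne', rpow_sub_one h2.ne']
  field_simp
  ring

lemma integrableOn_Jw {c d : ℝ} (hc : -1 < c) (hd : -1 < d) :
    IntegrableOn (Jw c d) (Icc (-1 : ℝ) 1) := by
  rw [← Icc_union_Icc_eq_Icc (b := (0 : ℝ)) (by norm_num) (by norm_num)]
  refine IntegrableOn.union ?_ ?_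
  · have hsing : IntegrableOn (fun x : ℝ => (1 + x) ^ d) (Icc (-1 : ℝ) 0) := by
      rw [← intervalIntegrable_iff_integrableOn_Icc_of_le (by norm_num)]
      simpa using (intervalIntegral.intervalIntegrable_rpow' (a := 0) (b := 1) hd).comp_add_left
        (c := 1)
    refine hsing.continuousOn_mul (ContinuousOn.rpow_const (by fun_prop) fun x hx => ?_)
      isCompact_Icc
    exact Or.inl (by linarith [hx.2])
  · have hsing : IntegrableOn (fun x : ℝ => (1 - x) ^ c) (Icc (0 : ℝ) 1) := by
      rw [← intervalIntegrable_iff_integrableOn_Icc_of_le (by norm_num)]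
      simpa using ((intervalIntegral.intervalIntegrable_rpow' (a := 0) (b := 1) hc).comp_sub_left
        (c := 1)).symm
    refine hsing.mul_continuousOn (ContinuousOn.rpow_const (by fun_prop) fun x hx => ?_)
      isCompact_Icc
    exact Or.inl (by linarith [hx.1])

end JacobiWeight

section JacobiPolynomials

open Polynomial

variable {c d : ℝ}

lemma integrableOn_eval_mul_Jw (hc : -1 < c) (hd : -1 < d) (f : ℝ[X]) :
    IntegrableOn (fun x => f.eval x * Jw c d x) (Icc (-1 : ℝ) 1) :=
  (integrableOn_Jw hc hd).continuousOn_mul f.continuous.continuousOn isCompact_Icc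

variable (hc : -1 < c) (hd : -1 < d)

/-- The moment functional of the Jacobi weight `J_{c,d}`. -/
def jacobiFunctional : ℝ[X] →ₗ[ℝ] ℝ where
  toFun f := ∫ x in Icc (-1 : ℝ) 1, f.eval x * Jw c d x
  map_add' f g := by
    simp only [eval_add, add_mul]
    exact integral_add (integrableOn_eval_mul_Jw hc hd f) (integrableOn_eval_mul_Jw hc hd g)
  map_smul' t f := by
    simp only [eval_smul, smul_eq_mul, mul_assoc, integral_const_mul, RingHom.id_apply]

lemma jacobiFunctional_apply (f : ℝ[X]) :
    jacobiFunctional hc hd f = ∫ x in Icc (-1 : ℝ) 1, f.eval x * Jw c d x := rfl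

lemma jacobiFunctional_nonneg {f : ℝ[X]} (hf : ∀ x ∈ Icc (-1 : ℝ) 1, 0 ≤ f.eval x) :
    0 ≤ jacobiFunctional hc hd f :=
  setIntegral_nonneg measurableSet_Icc fun x hx => mul_nonneg (hf x hx) (Jw_nonneg hx)

lemma jacobiFunctional_comp_neg_X (f : ℝ[X]) :
    jacobiFunctional hd hc (f.comp (-X)) = jacobiFunctional hc hd f := by
  have h := intervalIntegral.integral_comp_neg (a := -1) (b := 1) fun x => f.eval x * Jw c d x
  rw [neg_neg, intervalIntegral.integral_of_le (by norm_num),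
    intervalIntegral.integral_of_le (by norm_num)] at h
  rw [jacobiFunctional_apply, jacobiFunctional_apply, integral_Icc_eq_integral_Ioc,
    integral_Icc_eq_integral_Ioc, ← h]
  simp only [eval_comp, eval_neg, eval_X, Jw_neg]

lemma christoffelTransform_jacobiFunctional :
    christoffelTransform (jacobiFunctional hc hd) 1
      = jacobiFunctional (by linarith : -1 < c + 1) hd := by
  refine LinearMap.ext fun f => setIntegral_congr_fun measurableSet_Icc fun x hx => ?_
  simp only [LinearMap.mulLeft_apply, eval_mul, eval_sub, eval_C, eval_X, Jw_add_one_left d hc hx]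
  ring

lemma christoffelTransform_jacobiFunctional_nonneg (f : ℝ[X]) :
    0 ≤ christoffelTransform (jacobiFunctional hc hd) 1 (f * f) := by
  rw [christoffelTransform_jacobiFunctional hc hd]
  exact jacobiFunctional_nonneg _ _ fun x _ => by rw [eval_mul]; exact mul_self_nonneg _

/-- The Jacobi differential operator `(1 - x²) f'' + (d - c - (c + d + 2) x) f'`. -/
def jacobiOp (c d : ℝ) (f : ℝ[X]) : ℝ[X] :=
  (1 - X ^ 2) * derivative (derivative f) + (C (d - c) - C (c + d + 2) * X) * derivative f

/-- The eigenvalue `n (n + c + d + 1)` of the Jacobi operator on polynomials of degree `n`. -/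
def jacobiEigenvalue (c d : ℝ) (n : ℕ) : ℝ := n * (n + c + d + 1)

lemma hasDerivAt_Jw_mul_eval {x : ℝ} (hx : x ∈ Ioo (-1 : ℝ) 1) (f : ℝ[X]) :
    HasDerivAt (fun x => Jw (c + 1) (d + 1) x * f.eval x)
      (((1 - X ^ 2) * derivative f + (C (d - c) - C (c + d + 2) * X) * f).eval x * Jw c d x) x := by
  have h1 : 1 - x ≠ 0 := by linarith [hx.2]
  have h2 : 1 + x ≠ 0 := by linarith [hx.1]
  refine ((hasDerivAt_Jw (c + 1) (d + 1) hx).mul (f.hasDerivAt x)).congr_deriv ?_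
  simp only [Jw_add_one_add_one c d hx, eval_add, eval_mul, eval_sub, eval_one, eval_pow, eval_X,
    eval_C]
  field_simp
  ring

lemma jacobiFunctional_one_sub_sq_mul_derivative (f : ℝ[X]) :
    jacobiFunctional hc hd
      ((1 - X ^ 2) * derivative f + (C (d - c) - C (c + d + 2) * X) * f) = 0 := by
  have hcont : ContinuousOn (fun x => Jw (c + 1) (d + 1) x * f.eval x) (Icc (-1 : ℝ) 1) :=
    ((ContinuousOn.rpow_const (by fun_prop) fun _ _ => Or.inr (by linarith)).mul
      (ContinuousOn.rpow_const (by fun_prop) fun _ _ => Or.inr (by linarith))).mul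
      f.continuous.continuousOn
  have hint := integrableOn_eval_mul_Jw hc hd
    ((1 - X ^ 2) * derivative f + (C (d - c) - C (c + d + 2) * X) * f)
  rw [jacobiFunctional_apply, integral_Icc_eq_integral_Ioc,
    ← intervalIntegral.integral_of_le (by norm_num),
    intervalIntegral.integral_eq_sub_of_hasDerivAt_of_le (by norm_num) hcont
      (fun x hx => hasDerivAt_Jw_mul_eval hx f)
      ((intervalIntegrable_iff_integrableOn_Icc_of_le (by norm_num)).mpr hint)]
  have h1 : (0 : ℝ) ^ (c + 1) = 0 := zero_rpow (by linarith)
  have h2 : (0 : ℝ) ^ (d + 1) = 0 := zero_rpow (by linarith)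
  simp [Jw, h1, h2]

lemma jacobiFunctional_jacobiOp_mul (f g : ℝ[X]) :
    jacobiFunctional hc hd (jacobiOp c d f * g) =
      -jacobiFunctional hc hd ((1 - X ^ 2) * (derivative f * derivative g)) := by
  rw [eq_neg_iff_add_eq_zero, ← map_add,
    ← jacobiFunctional_one_sub_sq_mul_derivative hc hd (derivative f * g)]
  congr 1
  rw [jacobiOp, derivative_mul]
  ring

lemma jacobiFunctional_jacobiOp_symm (f g : ℝ[X]) :
    jacobiFunctional hc hd (jacobiOp c d f * g) = jacobiFunctional hc hd (f * jacobiOp c d g) := by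
  rw [jacobiFunctional_jacobiOp_mul, mul_comm f, jacobiFunctional_jacobiOp_mul,
    mul_comm (derivative f)]

lemma coeff_jacobiOp (c d : ℝ) (f : ℝ[X]) (n : ℕ) :
    (jacobiOp c d f).coeff n = ((n : ℝ) + 2) * (n + 1) * f.coeff (n + 2)
      + (d - c) * (n + 1) * f.coeff (n + 1) - jacobiEigenvalue c d n * f.coeff n := by
  rw [jacobiOp, sub_mul, sub_mul, one_mul, jacobiEigenvalue]
  simp only [coeff_add, coeff_sub, mul_assoc, coeff_C_mul, coeff_X_pow_mul', coeff_derivative]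
  rcases n with _ | _ | n <;> simp [coeff_X_mul, coeff_derivative] <;> ring

lemma natDegree_jacobiOp_le (c d : ℝ) (f : ℝ[X]) : (jacobiOp c d f).natDegree ≤ f.natDegree := by
  refine natDegree_le_iff_coeff_eq_zero.mpr fun n hn => ?_
  rw [coeff_jacobiOp, coeff_eq_zero_of_natDegree_lt hn, coeff_eq_zero_of_natDegree_lt (by omega),
    coeff_eq_zero_of_natDegree_lt (by omega)]
  ring

namespace IsOrthonormalSeq

variable {hc hd} {p : ℕ → ℝ[X]}

lemma jacobiOp_eq (hp : IsOrthonormalSeq (jacobiFunctional hc hd) p) (n : ℕ) :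
    jacobiOp c d (p n) = -jacobiEigenvalue c d n • p n := by
  have hdeg : (jacobiOp c d (p n)).natDegree ≤ n :=
    (natDegree_jacobiOp_le c d (p n)).trans (hp.natDegree_eq n).le
  have hexpand := hp.sum_apply_mul_smul hdeg
  rw [Finset.sum_range_succ, Finset.sum_eq_zero, zero_add] at hexpand
  · have hcoeff := coeff_jacobiOp c d (p n) n
    rw [← hexpand, coeff_smul, smul_eq_mul,
      coeff_eq_zero_of_natDegree_lt (n := n + 1) (by simp [hp.natDegree_eq]),
      coeff_eq_zero_of_natDegree_lt (n := n + 2) (by simp [hp.natDegree_eq]), mul_zero, mul_zero,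
      add_zero, zero_sub, ← neg_mul] at hcoeff
    have hlead : (p n).coeff n ≠ 0 := by
      have := leadingCoeff_ne_zero.mpr (hp.ne_zero n)
      rwa [leadingCoeff, hp.natDegree_eq] at this
    rw [← hexpand, mul_right_cancel₀ hlead hcoeff]
  · intro k hk
    have hlt : (jacobiOp c d (p k)).natDegree < n :=
      (natDegree_jacobiOp_le c d (p k)).trans_lt <|
        (hp.natDegree_eq k).trans_lt (Finset.mem_range.mp hk)
    rw [jacobiFunctional_jacobiOp_symm, mul_comm, hp.apply_mul_eq_zero hlt, zero_smul]

lemma apply_one_sub_sq_mul_derivative_sq (hp : IsOrthonormalSeq (jacobiFunctional hc hd) p)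
    (n : ℕ) : jacobiFunctional hc hd ((1 - X ^ 2) * (derivative (p n) * derivative (p n))) =
      jacobiEigenvalue c d n := by
  have h := jacobiFunctional_jacobiOp_mul hc hd (p n) (p n)
  rw [hp.jacobiOp_eq, smul_mul_assoc, map_smul, hp.apply_mul, if_pos rfl, smul_eq_mul, mul_one] at h
  exact neg_injective h.symm

lemma christoffelTransform_apply_sq_le (hp : IsOrthonormalSeq (jacobiFunctional hc hd) p) (n : ℕ) :
    christoffelTransform (jacobiFunctional hc hd) 1 (p n * p n) ≤ 2 := by
  have hpos : 0 ≤ jacobiFunctional hc hd ((1 + X) * (p n * p n)) :=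
    jacobiFunctional_nonneg hc hd fun x hx => by
      simp only [eval_mul, eval_add, eval_one, eval_X]
      exact mul_nonneg (by linarith [hx.1]) (mul_self_nonneg _)
  have hsum : christoffelTransform (jacobiFunctional hc hd) 1 (p n * p n) +
      jacobiFunctional hc hd ((1 + X) * (p n * p n)) = 2 * jacobiFunctional hc hd (p n * p n) := by
    rw [christoffelTransform_apply, ← map_add, two_mul, ← map_add, C_1]
    ring_nf
  rw [hp.apply_mul, if_pos rfl] at hsum
  linarith

lemma comp_neg_X (hp : IsOrthonormalSeq (jacobiFunctional hc hd) p) :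
    IsOrthonormalSeq (jacobiFunctional hd hc) fun n => (p n).comp (-X) where
  natDegree_eq n := by rw [natDegree_comp, hp.natDegree_eq, natDegree_neg, natDegree_X, mul_one]
  apply_mul n m := by rw [← mul_comp, jacobiFunctional_comp_neg_X, hp.apply_mul]

end IsOrthonormalSeq

lemma IsONPS.isOrthonormalSeq {a b : ℝ} (hac : -1 < a + c) (hbd : -1 < b + d) {p : ℕ → ℝ[X]}
    (hp : IsONPS (fun x => Jw a b x * Jw c d x) p) :
    IsOrthonormalSeq (jacobiFunctional hac hbd) p where
  natDegree_eq := hp.1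
  apply_mul n m := by
    rw [← hp.2.2 n m, jacobiFunctional_apply, integral_Icc_eq_integral_Ioo,
      integral_Icc_eq_integral_Ioo]
    refine setIntegral_congr_fun measurableSet_Ioo fun x hx => ?_
    simp only [eval_mul, Jw_mul_Jw hx]

end JacobiPolynomials

section Gronwall

variable {D : Set ℝ} {F F' S S' : ℝ → ℝ}

lemma antitoneOn_mul_exp_neg (hD : Convex ℝ D) (hF : ∀ x ∈ D, HasDerivAt F (F' x) x)
    (hS : ∀ x ∈ D, HasDerivAt S (S' x) x) (hle : ∀ x ∈ D, F' x ≤ S' x * F x) :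
    AntitoneOn (fun x => F x * exp (-S x)) D := by
  have hderiv : ∀ x ∈ D, HasDerivAt (fun x => F x * exp (-S x))
      ((F' x - S' x * F x) * exp (-S x)) x := fun x hx =>
    ((hF x hx).mul (hS x hx).neg.exp).congr_deriv (by simp only [Pi.neg_apply]; ring)
  refine antitoneOn_of_deriv_nonpos hD
    (fun x hx => (hderiv x hx).continuousAt.continuousWithinAt)
    (fun x hx => (hderiv x (interior_subset hx)).differentiableAt.differentiableWithinAt)
    fun x hx => ?_
  rw [(hderiv x (interior_subset hx)).deriv]
  exact mul_nonpos_of_nonpos_of_nonneg (sub_nonpos.mpr (hle x (interior_subset hx))) (exp_pos _).le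

lemma monotoneOn_mul_exp (hD : Convex ℝ D) (hF : ∀ x ∈ D, HasDerivAt F (F' x) x)
    (hS : ∀ x ∈ D, HasDerivAt S (S' x) x) (hle : ∀ x ∈ D, -(S' x * F x) ≤ F' x) :
    MonotoneOn (fun x => F x * exp (S x)) D := by
  have h := antitoneOn_mul_exp_neg hD (fun x hx => (hF x hx).neg) (fun x hx => (hS x hx).neg)
    fun x hx => (neg_le.mp (hle x hx)).trans_eq (neg_mul_neg _ _).symm
  exact h.neg.congr fun x _ => by simp only [Pi.neg_apply, neg_mul, neg_neg]

theorem le_mul_exp_abs_sub_of_abs_deriv_le (hD : Convex ℝ D)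
    (hF : ∀ x ∈ D, HasDerivAt F (F' x) x) (hS : ∀ x ∈ D, HasDerivAt S (S' x) x)
    (hle : ∀ x ∈ D, |F' x| ≤ S' x * F x) {x y : ℝ} (hx : x ∈ D) (hy : y ∈ D) (hFy : 0 ≤ F y) :
    F x ≤ F y * exp |S x - S y| := by
  rcases le_total y x with hyx | hxy
  · have h := antitoneOn_mul_exp_neg hD hF hS (fun z hz => (abs_le.mp (hle z hz)).2) hy hx hyx
    calc F x = F x * exp (-S x) * exp (S x) := by rw [mul_assoc, ← exp_add, neg_add_cancel]; simp
      _ ≤ F y * exp (-S y) * exp (S x) := by gcongr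
      _ = F y * exp (S x - S y) := by rw [mul_assoc, ← exp_add, neg_add_eq_sub]
      _ ≤ F y * exp |S x - S y| := by gcongr; exact le_abs_self _
  · have h := monotoneOn_mul_exp hD hF hS (fun z hz => (abs_le.mp (hle z hz)).1) hx hy hxy
    calc F x = F x * exp (S x) * exp (-S x) := by rw [mul_assoc, ← exp_add, add_neg_cancel]; simp
      _ ≤ F y * exp (S y) * exp (-S x) := by gcongr
      _ = F y * exp (-(S x - S y)) := by rw [mul_assoc, ← exp_add, neg_sub, sub_eq_add_neg]
      _ ≤ F y * exp |S x - S y| := by gcongr; exact neg_le_abs _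

theorem abs_sub_le_sub_of_abs_deriv_le {a b : ℝ} (hab : a ≤ b) (hFc : ContinuousOn F (Icc a b))
    (hSc : ContinuousOn S (Icc a b)) (hF : ∀ x ∈ Ioo a b, HasDerivAt F (F' x) x)
    (hS : ∀ x ∈ Ioo a b, HasDerivAt S (S' x) x) (hle : ∀ x ∈ Ioo a b, |F' x| ≤ S' x) :
    |F b - F a| ≤ S b - S a := by
  rw [← interior_Icc] at hF hS hle
  have hsub : MonotoneOn (fun x => S x - F x) (Icc a b) :=
    monotoneOn_of_hasDerivWithinAt_nonneg (convex_Icc a b) (hSc.sub hFc)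
      (fun x hx => ((hS x hx).sub (hF x hx)).hasDerivWithinAt)
      fun x hx => sub_nonneg.mpr (abs_le.mp (hle x hx)).2
  have hadd : MonotoneOn (fun x => S x + F x) (Icc a b) :=
    monotoneOn_of_hasDerivWithinAt_nonneg (convex_Icc a b) (hSc.add hFc)
      (fun x hx => ((hS x hx).add (hF x hx)).hasDerivWithinAt)
      fun x hx => by linarith [(abs_le.mp (hle x hx)).1]
  have ha := left_mem_Icc.mpr hab
  have hb := right_mem_Icc.mpr hab
  rw [abs_le]
  constructor <;> linarith [hsub ha hb hab, hadd ha hb hab]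

end Gronwall

section SoninFunction

open Polynomial

/-- The Sonin function `l f² + (1 - x²) f'²` of an eigenfunction `f` of the Jacobi operator with
eigenvalue `-l`. -/
def sonin (l : ℝ) (f : ℝ[X]) : ℝ[X] :=
  C l * (f * f) + (1 - X ^ 2) * (derivative f * derivative f)

/-- The linear factor in the derivative of the Sonin function. -/
def drift (c d : ℝ) : ℝ[X] := C (c + d + 1) * X + C (c - d)

/-- A bound for `drift c d` on `[-1, 1]`. -/
def driftBound (c d : ℝ) : ℝ := |c + d + 1| + |c - d|

/-- The Sonin function corrected by a cross term. The derivative of its product with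
`J_{c+1/2,d+1/2}` contains neither `f²` nor `f'²`. -/
def modifiedSonin (c d l : ℝ) (f : ℝ[X]) : ℝ[X] :=
  sonin l f - drift c d * (f * derivative f)

/-- The points of `[0, 1)` to the left of the turning point `1 - driftBound c d ^ 2 / l`. -/
def oscillatoryRegion (c d l : ℝ) : Set ℝ :=
  {x | x ∈ Ico (0 : ℝ) 1 ∧ driftBound c d ^ 2 ≤ l * (1 - x)}

variable {c d l x y : ℝ} {f : ℝ[X]}

lemma driftBound_nonneg (c d : ℝ) : 0 ≤ driftBound c d := by
  rw [driftBound]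
  positivity

lemma abs_eval_drift_le (c d : ℝ) (hx : x ∈ Icc (-1 : ℝ) 1) :
    |(drift c d).eval x| ≤ driftBound c d := by
  simp only [drift, eval_add, eval_mul, eval_C, eval_X, driftBound]
  refine (abs_add_le _ _).trans (add_le_add_left ?_ _)
  rw [abs_mul]
  exact mul_le_of_le_one_right (abs_nonneg _) (abs_le.mpr hx)

lemma eval_sonin (l : ℝ) (f : ℝ[X]) (x : ℝ) :
    (sonin l f).eval x = l * f.eval x ^ 2 + (1 - x ^ 2) * (derivative f).eval x ^ 2 := by
  simp only [sonin, eval_add, eval_mul, eval_sub, eval_one, eval_C, eval_X, sq]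

lemma mul_eval_sq_le_sonin (l : ℝ) (f : ℝ[X]) (hx : x ∈ Icc (-1 : ℝ) 1) :
    l * f.eval x ^ 2 ≤ (sonin l f).eval x := by
  rw [eval_sonin]
  have : 0 ≤ 1 - x ^ 2 := by nlinarith [hx.1, hx.2]
  exact le_add_of_nonneg_right (by positivity)

lemma one_sub_mul_derivative_sq_le_sonin (hl : 0 ≤ l) (f : ℝ[X]) (hx : x ∈ Icc (0 : ℝ) 1) :
    (1 - x) * (derivative f).eval x ^ 2 ≤ (sonin l f).eval x := by
  rw [eval_sonin]
  have : 1 - x ≤ 1 - x ^ 2 := by nlinarith [hx.1, hx.2]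
  have := mul_le_mul_of_nonneg_right this (sq_nonneg ((derivative f).eval x))
  have := mul_nonneg hl (sq_nonneg (f.eval x))
  linarith

lemma sonin_nonneg (hl : 0 ≤ l) (f : ℝ[X]) (hx : x ∈ Icc (-1 : ℝ) 1) : 0 ≤ (sonin l f).eval x :=
  (mul_nonneg hl (sq_nonneg _)).trans (mul_eval_sq_le_sonin l f hx)

lemma two_mul_sqrt_mul_abs_le_sonin (hl : 0 ≤ l) (f : ℝ[X]) (hx : x ∈ Icc (0 : ℝ) 1) :
    2 * √(l * (1 - x)) * |f.eval x * (derivative f).eval x| ≤ (sonin l f).eval x := by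
  have h1 : 0 ≤ 1 - x := sub_nonneg.mpr hx.2
  have hmean := two_mul_le_add_sq (√l * |f.eval x|) (√(1 - x) * |(derivative f).eval x|)
  have hle : 1 - x ≤ 1 - x ^ 2 := by nlinarith [hx.1, hx.2]
  have := mul_le_mul_of_nonneg_right hle (sq_nonneg ((derivative f).eval x))
  rw [mul_pow, mul_pow, sq_sqrt hl, sq_sqrt h1, sq_abs, sq_abs] at hmean
  rw [eval_sonin, sqrt_mul hl, abs_mul]
  linarith

lemma mul_derivative_derivative (hf : jacobiOp c d f = -l • f) :
    (1 - X ^ 2) * derivative (derivative f) =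
      -(C l * f) + (C (c - d) + C (c + d + 2) * X) * derivative f := by
  rw [jacobiOp, smul_eq_C_mul, C_neg, C_sub] at hf
  rw [C_sub]
  linear_combination hf

lemma derivative_sonin (hf : jacobiOp c d f = -l • f) :
    derivative (sonin l f) = 2 * derivative f ^ 2 * drift c d := by
  have hode := mul_derivative_derivative hf
  simp only [sonin, drift, derivative_add, derivative_mul, derivative_sub, derivative_one,
    derivative_C, derivative_X_pow, Nat.cast_ofNat, C_add, C_sub, C_1, map_ofNat] at hode ⊢
  linear_combination (2 * derivative f) * hode

lemma hasDerivAt_Jw_mul_modifiedSonin (hf : jacobiOp c d f = -l • f) (hx : x ∈ Ioo (-1 : ℝ) 1) :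
    HasDerivAt (fun x => Jw (c + 1 / 2) (d + 1 / 2) x * (modifiedSonin c d l f).eval x)
      (-(Jw (c + 1 / 2) (d + 1 / 2) x * ((c + 1 / 2) / (1 - x) + (d + 1 / 2) / (1 + x)) *
        (f.eval x * (derivative f).eval x))) x := by
  have h1 : 1 - x ≠ 0 := by linarith [hx.2]
  have h2 : 1 + x ≠ 0 := by linarith [hx.1]
  refine ((hasDerivAt_Jw (c + 1 / 2) (d + 1 / 2) hx).mul
    ((modifiedSonin c d l f).hasDerivAt x)).congr_deriv ?_
  have hode := congrArg (eval x) (mul_derivative_derivative hf)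
  simp only [modifiedSonin, derivative_sub, derivative_sonin hf, drift, derivative_add,
    derivative_mul, derivative_C, derivative_X, eval_sub, eval_add, eval_mul, eval_C, eval_X,
    eval_pow, eval_ofNat, eval_sonin, eval_zero, eval_one, eval_neg] at hode ⊢
  have hode' : (derivative (derivative f)).eval x = (-(l * f.eval x)
      + ((c - d) + (c + d + 2) * x) * (derivative f).eval x) / ((1 - x) * (1 + x)) := by
    rw [← hode]
    field_simp
    ring
  rw [hode']
  field_simp
  ring

lemma driftBound_le_sqrt (hx : x ∈ oscillatoryRegion c d l) :
    driftBound c d ≤ √(l * (1 - x)) :=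
  le_sqrt_of_sq_le hx.2

lemma abs_eval_drift_mul_le (hl : 0 ≤ l) (f : ℝ[X]) (hx : x ∈ oscillatoryRegion c d l) :
    |(drift c d * (f * derivative f)).eval x| ≤ (sonin l f).eval x / 2 := by
  have hx' : x ∈ Icc (0 : ℝ) 1 := Ico_subset_Icc_self hx.1
  have hdrift : |(drift c d).eval x| ≤ √(l * (1 - x)) :=
    (abs_eval_drift_le c d ⟨by linarith [hx'.1], hx'.2⟩).trans (driftBound_le_sqrt hx)
  have hmean := two_mul_sqrt_mul_abs_le_sonin hl f hx'
  rw [eval_mul, eval_mul, abs_mul]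
  linarith [mul_le_mul_of_nonneg_right hdrift (abs_nonneg (f.eval x * (derivative f).eval x))]

lemma sonin_le_two_mul_modifiedSonin (hl : 0 ≤ l) (f : ℝ[X]) (hx : x ∈ oscillatoryRegion c d l) :
    (sonin l f).eval x ≤ 2 * (modifiedSonin c d l f).eval x := by
  rw [modifiedSonin, eval_sub]
  linarith [(abs_le.mp (abs_eval_drift_mul_le hl f hx)).2]

lemma modifiedSonin_le (hl : 0 ≤ l) (f : ℝ[X]) (hx : x ∈ oscillatoryRegion c d l) :
    (modifiedSonin c d l f).eval x ≤ 3 / 2 * (sonin l f).eval x := by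
  rw [modifiedSonin, eval_sub]
  linarith [(abs_le.mp (abs_eval_drift_mul_le hl f hx)).1]

lemma convex_oscillatoryRegion (hl : 0 ≤ l) : Convex ℝ (oscillatoryRegion c d l) := by
  refine OrdConnected.convex ⟨fun x hx y hy z hz => ⟨⟨hx.1.1.trans hz.1, hz.2.trans_lt hy.1.2⟩, ?_⟩⟩
  have hzy : 1 - y ≤ 1 - z := sub_le_sub_left hz.2 1
  exact hy.2.trans (mul_le_mul_of_nonneg_left hzy hl)

lemma hasDerivAt_const_div_sqrt (hl : 0 < l) (hx : x < 1) (A : ℝ) :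
    HasDerivAt (fun x => 2 * A / √(l * (1 - x))) (A / ((1 - x) * √(l * (1 - x)))) x := by
  have hpos : 0 < l * (1 - x) := mul_pos hl (sub_pos.mpr hx)
  have hsqrt := sqrt_pos.mpr hpos
  have h1 : 1 - x ≠ 0 := (sub_pos.mpr hx).ne'
  refine ((hasDerivAt_const x (2 * A)).div
    ((((hasDerivAt_id x).const_sub 1).const_mul l).sqrt hpos.ne') hsqrt.ne').congr_deriv ?_
  simp only [id_eq, sq_sqrt hpos.le]
  field_simp
  ring

lemma abs_deriv_Jw_mul_modifiedSonin_le (hc : -(1 / 2) ≤ c) (hd : -(1 / 2) ≤ d) (hl : 0 < l)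
    (f : ℝ[X]) (hx : x ∈ oscillatoryRegion c d l) :
    |-(Jw (c + 1 / 2) (d + 1 / 2) x * ((c + 1 / 2) / (1 - x) + (d + 1 / 2) / (1 + x)) *
        (f.eval x * (derivative f).eval x))| ≤
      (c + d + 1) / ((1 - x) * √(l * (1 - x))) *
        (Jw (c + 1 / 2) (d + 1 / 2) x * (modifiedSonin c d l f).eval x) := by
  have hx0 : 0 ≤ x := hx.1.1
  have h1 : 0 < 1 - x := sub_pos.mpr hx.1.2
  have : 0 < √(l * (1 - x)) := sqrt_pos.mpr (mul_pos hl h1)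
  have hJ : 0 ≤ Jw (c + 1 / 2) (d + 1 / 2) x := Jw_nonneg ⟨by linarith, hx.1.2.le⟩
  have hc' : 0 ≤ c + 1 / 2 := by linarith
  have hd' : 0 ≤ d + 1 / 2 := by linarith
  have hlog : (c + 1 / 2) / (1 - x) + (d + 1 / 2) / (1 + x) ≤ (c + d + 1) / (1 - x) := by
    have : (d + 1 / 2) / (1 + x) ≤ (d + 1 / 2) / (1 - x) :=
      div_le_div_of_nonneg_left hd' h1 (by linarith)
    calc _ ≤ (c + 1 / 2) / (1 - x) + (d + 1 / 2) / (1 - x) := by gcongr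
      _ = (c + d + 1) / (1 - x) := by ring
  have hcross : √(l * (1 - x)) * |f.eval x * (derivative f).eval x| ≤
      (modifiedSonin c d l f).eval x := by
    linarith [two_mul_sqrt_mul_abs_le_sonin hl.le f (Ico_subset_Icc_self hx.1),
      sonin_le_two_mul_modifiedSonin hl.le f hx]
  rw [abs_neg, abs_mul, abs_of_nonneg (mul_nonneg hJ (by positivity))]
  calc _ ≤ Jw (c + 1 / 2) (d + 1 / 2) x * ((c + d + 1) / (1 - x)) *
        |f.eval x * (derivative f).eval x| := by gcongr
    _ = (c + d + 1) / ((1 - x) * √(l * (1 - x))) * (Jw (c + 1 / 2) (d + 1 / 2) x *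
        (√(l * (1 - x)) * |f.eval x * (derivative f).eval x|)) := by field_simp
    _ ≤ _ := by
      have : 0 ≤ c + d + 1 := by linarith
      gcongr

lemma Jw_mul_modifiedSonin_le (hc : -(1 / 2) ≤ c) (hd : -(1 / 2) ≤ d) (hl : 0 < l)
    (hf : jacobiOp c d f = -l • f) (hx : x ∈ oscillatoryRegion c d l)
    (hy : y ∈ oscillatoryRegion c d l) :
    Jw (c + 1 / 2) (d + 1 / 2) x * (modifiedSonin c d l f).eval x ≤
      Jw (c + 1 / 2) (d + 1 / 2) y * (modifiedSonin c d l f).eval y * exp 2 := by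
  have hIoo : ∀ z ∈ oscillatoryRegion c d l, z ∈ Ioo (-1 : ℝ) 1 := fun z hz =>
    ⟨by linarith [hz.1.1], hz.1.2⟩
  have hphase : ∀ z ∈ oscillatoryRegion c d l,
      2 * (c + d + 1) / √(l * (1 - z)) ∈ Icc (0 : ℝ) 2 := fun z hz => by
    have hle : c + d + 1 ≤ √(l * (1 - z)) := by
      refine le_trans ?_ (driftBound_le_sqrt hz)
      exact (le_abs_self _).trans (le_add_of_nonneg_right (abs_nonneg _))
    have hnonneg : 0 ≤ c + d + 1 := by linarith
    exact ⟨by positivity, by rw [mul_div_assoc]; linarith [div_le_one_of_le₀ hle (sqrt_nonneg _)]⟩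
  have hnonneg : 0 ≤ Jw (c + 1 / 2) (d + 1 / 2) y * (modifiedSonin c d l f).eval y := by
    have hJ : 0 ≤ Jw (c + 1 / 2) (d + 1 / 2) y := Jw_nonneg (Ioo_subset_Icc_self (hIoo y hy))
    refine mul_nonneg hJ ?_
    linarith [sonin_nonneg hl.le f (Ioo_subset_Icc_self (hIoo y hy)),
      sonin_le_two_mul_modifiedSonin hl.le f hy]
  refine (le_mul_exp_abs_sub_of_abs_deriv_le (convex_oscillatoryRegion hl.le)
    (fun z hz => hasDerivAt_Jw_mul_modifiedSonin hf (hIoo z hz))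
    (fun z hz => hasDerivAt_const_div_sqrt hl hz.1.2 (c + d + 1))
    (fun z hz => abs_deriv_Jw_mul_modifiedSonin_le hc hd hl f hz) hx hy hnonneg).trans ?_
  gcongr
  rw [abs_le]
  constructor <;> linarith [(hphase x hx).1, (hphase x hx).2, (hphase y hy).1, (hphase y hy).2]

lemma Jw_add_half_add_half_le (c d : ℝ) (hx : x ∈ Ico (0 : ℝ) 1) :
    Jw (c + 1 / 2) (d + 1 / 2) x ≤ Jw c d x := by
  have hx' : x ∈ Ioo (-1 : ℝ) 1 := ⟨by linarith [hx.1], hx.2⟩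
  rw [← Jw_mul_Jw hx']
  refine mul_le_of_le_one_right (Jw_nonneg (Ioo_subset_Icc_self hx')) ?_
  rw [Jw, ← mul_rpow (sub_nonneg.mpr hx.2.le) (by linarith [hx.1])]
  exact rpow_le_one (by nlinarith [hx.1, hx.2]) (by nlinarith [hx.1]) (by norm_num)

lemma jacobiFunctional_sonin (hc : -1 < c) (hd : -1 < d) {p : ℕ → ℝ[X]}
    (hp : IsOrthonormalSeq (jacobiFunctional hc hd) p) (n : ℕ) :
    jacobiFunctional hc hd (sonin (jacobiEigenvalue c d n) (p n)) =
      2 * jacobiEigenvalue c d n := by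
  rw [sonin, map_add, ← smul_eq_C_mul, map_smul, hp.apply_mul,
    hp.apply_one_sub_sq_mul_derivative_sq, if_pos rfl, smul_eq_mul]
  ring

lemma Jw_mul_sonin_le {hc' : -1 < c} {hd' : -1 < d} {p : ℕ → ℝ[X]} {n : ℕ}
    (hp : IsOrthonormalSeq (jacobiFunctional hc' hd') p) (hc : -(1 / 2) ≤ c) (hd : -(1 / 2) ≤ d)
    (hl : 0 < jacobiEigenvalue c d n)
    (hhalf : driftBound c d ^ 2 ≤ jacobiEigenvalue c d n * (1 / 2))
    (hx : x ∈ oscillatoryRegion c d (jacobiEigenvalue c d n)) :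
    Jw (c + 1 / 2) (d + 1 / 2) x * (sonin (jacobiEigenvalue c d n) (p n)).eval x ≤
      12 * exp 2 * jacobiEigenvalue c d n := by
  set l := jacobiEigenvalue c d n
  have hW : 0 ≤ Jw (c + 1 / 2) (d + 1 / 2) x := Jw_nonneg ⟨by linarith [hx.1.1], hx.1.2.le⟩
  have hsub : Icc (0 : ℝ) (1 / 2) ⊆ Icc (-1) 1 := Icc_subset_Icc (by norm_num) (by norm_num)
  have hpoint : ∀ y ∈ Icc (0 : ℝ) (1 / 2),
      Jw (c + 1 / 2) (d + 1 / 2) x * (sonin l (p n)).eval x ≤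
        3 * exp 2 * ((sonin l (p n)).eval y * Jw c d y) := fun y hy => by
    have hy' : y ∈ oscillatoryRegion c d l :=
      ⟨⟨hy.1, by linarith [hy.2]⟩, hhalf.trans (by gcongr; linarith [hy.2])⟩
    have hWy : 0 ≤ Jw (c + 1 / 2) (d + 1 / 2) y := Jw_nonneg (hsub hy)
    calc _ ≤ Jw (c + 1 / 2) (d + 1 / 2) x * (2 * (modifiedSonin c d l (p n)).eval x) := by
          gcongr; exact sonin_le_two_mul_modifiedSonin hl.le _ hx
      _ = 2 * (Jw (c + 1 / 2) (d + 1 / 2) x * (modifiedSonin c d l (p n)).eval x) := by ring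
      _ ≤ 2 * (Jw (c + 1 / 2) (d + 1 / 2) y * (modifiedSonin c d l (p n)).eval y * exp 2) := by
          exact mul_le_mul_of_nonneg_left
            (Jw_mul_modifiedSonin_le hc hd hl (hp.jacobiOp_eq n) hx hy') zero_le_two
      _ ≤ 2 * (Jw (c + 1 / 2) (d + 1 / 2) y * (3 / 2 * (sonin l (p n)).eval y) * exp 2) := by
          gcongr; exact modifiedSonin_le hl.le _ hy'
      _ ≤ 2 * (Jw c d y * (3 / 2 * (sonin l (p n)).eval y) * exp 2) := by
          have := sonin_nonneg hl.le (p n) (hsub hy)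
          gcongr; exact Jw_add_half_add_half_le c d hy'.1
      _ = _ := by ring
  have hint := integrableOn_eval_mul_Jw hc' hd' (sonin l (p n))
  have hmono := setIntegral_mono_on (integrableOn_const (by simp))
    ((hint.mono_set hsub).const_mul (3 * exp 2)) measurableSet_Icc hpoint
  have htotal : ∫ y in Icc (0 : ℝ) (1 / 2), (sonin l (p n)).eval y * Jw c d y ≤ 2 * l := by
    rw [← jacobiFunctional_sonin hc' hd' hp n, jacobiFunctional_apply]
    refine setIntegral_mono_set hint ?_ (Eventually.of_forall hsub)
    filter_upwards [ae_restrict_mem measurableSet_Icc] with y hy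
    exact mul_nonneg (sonin_nonneg hl.le _ hy) (Jw_nonneg hy)
  rw [setIntegral_const, integral_const_mul, measureReal_def, volume_Icc, sub_zero,
    ENNReal.toReal_ofReal (by norm_num), smul_eq_mul] at hmono
  linarith [mul_le_mul_of_nonneg_left htotal (by positivity : 0 ≤ 3 * exp 2)]

lemma antitoneOn_sonin_mul_rpow (hl : 0 ≤ l) (hf : jacobiOp c d f = -l • f) :
    AntitoneOn (fun x => (sonin l f).eval x * (1 - x) ^ (2 * driftBound c d)) (Ico 0 1) := by
  have hphase : ∀ x ∈ Ico (0 : ℝ) 1, HasDerivAt (fun x => -(log (1 - x) * (2 * driftBound c d)))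
      (2 * driftBound c d / (1 - x)) x := fun x hx => by
    have h1 : 1 - x ≠ 0 := (sub_pos.mpr hx.2).ne'
    refine ((((hasDerivAt_id x).const_sub 1).log h1).mul_const _).neg.congr_deriv ?_
    simp only [id_eq]
    ring
  refine (antitoneOn_mul_exp_neg (convex_Ico 0 1) (fun x _ => (sonin l f).hasDerivAt x) hphase
    fun x hx => ?_).congr fun x hx => ?_
  · have h1 : 0 < 1 - x := sub_pos.mpr hx.2
    have hK := driftBound_nonneg c d
    have hdrift := (le_abs_self _).trans (abs_eval_drift_le c d ⟨by linarith [hx.1], hx.2.le⟩)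
    have hsonin := one_sub_mul_derivative_sq_le_sonin hl f (Ico_subset_Icc_self hx)
    calc (derivative (sonin l f)).eval x
        = 2 * (derivative f).eval x ^ 2 * (drift c d).eval x := by
          rw [derivative_sonin hf, eval_mul, eval_mul, eval_pow, eval_ofNat]
      _ ≤ 2 * (derivative f).eval x ^ 2 * driftBound c d := by gcongr
      _ = 2 * driftBound c d / (1 - x) * ((1 - x) * (derivative f).eval x ^ 2) := by
          field_simp
      _ ≤ 2 * driftBound c d / (1 - x) * (sonin l f).eval x := by gcongr
  · simp only [neg_neg, rpow_def_of_pos (sub_pos.mpr hx.2)]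

lemma Jw_le_rpow_mul (c d : ℝ) (hx : x ∈ Icc (0 : ℝ) 1) : Jw c d x ≤ (1 - x) ^ c * 2 ^ |d| := by
  refine mul_le_mul_of_nonneg_left ?_ (rpow_nonneg (sub_nonneg.mpr hx.2) c)
  calc (1 + x) ^ d ≤ (1 + x) ^ |d| :=
        rpow_le_rpow_of_exponent_le (by linarith [hx.1]) (le_abs_self d)
    _ ≤ 2 ^ |d| := rpow_le_rpow (by linarith [hx.1]) (by linarith [hx.2]) (abs_nonneg d)

lemma continuousOn_Jw_of_nonneg (hc : 0 ≤ c) (hd : 0 ≤ d) (s : Set ℝ) : ContinuousOn (Jw c d) s :=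
  ((continuous_const.sub continuous_id).rpow_const fun _ => Or.inr hc).mul
    ((continuous_const.add continuous_id).rpow_const fun _ => Or.inr hd) |>.continuousOn

lemma abs_eval_derivative_le (hc : -1 < c) (hd : -1 < d) (hl : 0 ≤ l)
    (hf : jacobiOp c d f = -l • f) (hx : x ∈ Ico (0 : ℝ) 1) {P : ℝ}
    (hP : ∀ y ∈ Ioo x 1, |f.eval y| ≤ P) :
    |(derivative f).eval x| ≤ l * P * 2 ^ |d| / (c + 1) := by
  set u : ℝ → ℝ := fun y => Jw (c + 1) (d + 1) y * (derivative f).eval y with hu_def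
  set v : ℝ → ℝ := fun y => -(l * P * 2 ^ |d| / (c + 1) * (1 - y) ^ (c + 1)) with hv_def
  have hc1 : 0 < c + 1 := by linarith
  have hd1 : 0 < d + 1 := by linarith
  have h1x : 0 < (1 - x) ^ (c + 1) := rpow_pos_of_pos (sub_pos.mpr hx.2) _
  have hu : ∀ y ∈ Ioo x 1, HasDerivAt u (-l * f.eval y * Jw c d y) y := fun y hy => by
    refine (hasDerivAt_Jw_mul_eval ⟨by linarith [hx.1, hy.1], hy.2⟩ (derivative f)).congr_deriv ?_
    have := congrArg (eval y) hf
    rw [eval_smul, smul_eq_mul] at this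
    rw [← this, jacobiOp]
  have hv : ∀ y ∈ Ioo x 1, HasDerivAt v (l * P * ((1 - y) ^ c * 2 ^ |d|)) y := fun y hy => by
    refine ((((hasDerivAt_id y).const_sub 1).rpow_const (p := c + 1)
      (Or.inl (sub_pos.mpr hy.2).ne')).const_mul _).neg.congr_deriv ?_
    rw [add_sub_cancel_right]
    field_simp
    simp only [id_eq]
  have hle : ∀ y ∈ Ioo x 1,
      |-l * f.eval y * Jw c d y| ≤ l * P * ((1 - y) ^ c * 2 ^ |d|) := fun y hy => by
    have hy' : y ∈ Icc (0 : ℝ) 1 := ⟨hx.1.trans hy.1.le, hy.2.le⟩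
    have hJ : 0 ≤ Jw c d y := Jw_nonneg ⟨by linarith [hy'.1], hy'.2⟩
    rw [abs_mul, abs_mul, abs_neg, abs_of_nonneg hl, abs_of_nonneg hJ]
    exact mul_le_mul (mul_le_mul_of_nonneg_left (hP y hy) hl) (Jw_le_rpow_mul c d hy') hJ
      (mul_nonneg hl ((abs_nonneg _).trans (hP y hy)))
  have hcomp := abs_sub_le_sub_of_abs_deriv_le (F := u) (S := v) hx.2.le
    ((continuousOn_Jw_of_nonneg hc1.le hd1.le _).mul (derivative f).continuousOn)
    (continuousOn_const.mul (.rpow_const (by fun_prop) fun _ _ => Or.inr hc1.le)).neg hu hv hle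
  have hu1 : u 1 = 0 := by simp only [hu_def, Jw, sub_self, zero_rpow hc1.ne', zero_mul]
  have hv1 : v 1 = 0 := by simp only [hv_def, sub_self, zero_rpow hc1.ne', mul_zero, neg_zero]
  have hone : 1 ≤ (1 + x) ^ (d + 1) := one_le_rpow (by linarith [hx.1]) hd1.le
  rw [hu1, hv1, zero_sub, zero_sub, abs_neg, hu_def, hv_def, neg_neg, abs_mul, Jw,
    abs_of_nonneg (by positivity)] at hcomp
  refine le_of_mul_le_mul_left ?_ h1x
  calc (1 - x) ^ (c + 1) * |(derivative f).eval x|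
      ≤ (1 - x) ^ (c + 1) * (1 + x) ^ (d + 1) * |(derivative f).eval x| := by
        gcongr; exact le_mul_of_one_le_right h1x.le hone
    _ ≤ (1 - x) ^ (c + 1) * (l * P * 2 ^ |d| / (c + 1)) := by linarith

lemma sq_eval_le_four_mul_sq_eval (hc : -1 < c) (hd : -1 < d) (hl : 0 ≤ l)
    (hf : jacobiOp c d f = -l • f) (hx : x ∈ Ico (0 : ℝ) 1)
    (hsmall : l * (1 - x) ≤ (c + 1) / (2 * 2 ^ |d|)) (hy : y ∈ Icc x 1) :
    f.eval y ^ 2 ≤ 4 * f.eval x ^ 2 := by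
  have hc1 : 0 < c + 1 := by linarith
  obtain ⟨z, hz, hmax⟩ := isCompact_Icc.exists_isMaxOn (nonempty_Icc.mpr hx.2.le)
    f.continuous.abs.continuousOn
  have hdiff : |f.eval z - f.eval x| ≤ 1 / 2 * |f.eval z| := by
    refine (abs_sub_le_sub_of_abs_deriv_le (F := fun t => f.eval t)
      (S := fun t => l * |f.eval z| * 2 ^ |d| / (c + 1) * t) hz.1 (by fun_prop) (by fun_prop)
      (fun t _ => f.hasDerivAt t) (fun t _ => (hasDerivAt_id t).const_mul _)
      fun t ht => ?_).trans ?_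
    · rw [mul_one]
      exact abs_eval_derivative_le hc hd hl hf ⟨hx.1.trans ht.1.le, ht.2.trans_le hz.2⟩
        fun w hw => hmax ⟨(ht.1.trans hw.1).le, hw.2.le⟩
    · have hzx : l * (z - x) ≤ (c + 1) / (2 * 2 ^ |d|) := le_trans (by gcongr; exact hz.2) hsmall
      calc _ = 2 ^ |d| / (c + 1) * (l * (z - x)) * |f.eval z| := by ring
        _ ≤ 2 ^ |d| / (c + 1) * ((c + 1) / (2 * 2 ^ |d|)) * |f.eval z| := by gcongr
        _ = 1 / 2 * |f.eval z| := by field_simp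
  have hzx : |f.eval z| ≤ 2 * |f.eval x| := by
    linarith [abs_sub_abs_le_abs_sub (f.eval z) (f.eval x)]
  have hyx : |f.eval y| ≤ 2 * |f.eval x| := (hmax hy).trans hzx
  calc f.eval y ^ 2 = |f.eval y| ^ 2 := (sq_abs _).symm
    _ ≤ (2 * |f.eval x|) ^ 2 := by gcongr
    _ = 4 * f.eval x ^ 2 := by rw [mul_pow, sq_abs]; norm_num

end SoninFunction

section SoninBound

open Polynomial

variable {c d x : ℝ} {hc' : -1 < c} {hd' : -1 < d} {p : ℕ → ℝ[X]} {n : ℕ} {M : ℝ}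

lemma sonin_mul_rpow_le_of_sq_le (hp : IsOrthonormalSeq (jacobiFunctional hc' hd') p)
    (hc : -(1 / 2) ≤ c) (hd : -(1 / 2) ≤ d) (hM : 1 ≤ M) (hKM : driftBound c d ≤ M)
    (hl : 2 * M ^ 2 ≤ jacobiEigenvalue c d n) (hx : x ∈ Ico (0 : ℝ) 1)
    (hMx : M ^ 2 ≤ jacobiEigenvalue c d n * (1 - x)) :
    (sonin (jacobiEigenvalue c d n) (p n)).eval x *
        (1 - x + 1 / jacobiEigenvalue c d n) ^ (c + 1 / 2) ≤
      12 * exp 2 * 2 ^ (c + 1 / 2) * jacobiEigenvalue c d n := by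
  set l := jacobiEigenvalue c d n
  have hM2 : 1 ≤ M ^ 2 := one_le_pow₀ hM
  have hl0 : 0 < l := by linarith
  have hK2 : driftBound c d ^ 2 ≤ M ^ 2 := pow_le_pow_left₀ (driftBound_nonneg c d) hKM 2
  have hsonin := sonin_nonneg hl0.le (p n) ⟨by linarith [hx.1], hx.2.le⟩
  have h1 : 0 ≤ 1 - x := sub_nonneg.mpr hx.2.le
  have hinv : 1 / l ≤ 1 - x := (div_le_iff₀' hl0).mpr (hM2.trans hMx)
  have hone : 1 ≤ (1 + x) ^ (d + 1 / 2) := one_le_rpow (by linarith [hx.1]) (by linarith)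
  have hweight : (1 - x + 1 / l) ^ (c + 1 / 2) ≤
      2 ^ (c + 1 / 2) * Jw (c + 1 / 2) (d + 1 / 2) x := by
    calc (1 - x + 1 / l) ^ (c + 1 / 2) ≤ (2 * (1 - x)) ^ (c + 1 / 2) :=
          rpow_le_rpow (by positivity) (by linarith) (by linarith)
      _ = 2 ^ (c + 1 / 2) * (1 - x) ^ (c + 1 / 2) := mul_rpow zero_le_two h1
      _ ≤ _ := by gcongr; exact le_mul_of_one_le_right (rpow_nonneg h1 _) hone
  have hosc := Jw_mul_sonin_le hp hc hd hl0 (by linarith) ⟨hx, hK2.trans hMx⟩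
  calc _ ≤ (sonin l (p n)).eval x * (2 ^ (c + 1 / 2) * Jw (c + 1 / 2) (d + 1 / 2) x) := by gcongr
    _ = 2 ^ (c + 1 / 2) * (Jw (c + 1 / 2) (d + 1 / 2) x * (sonin l (p n)).eval x) := by ring
    _ ≤ 2 ^ (c + 1 / 2) * (12 * exp 2 * l) := by gcongr
    _ = _ := by ring

lemma eval_sonin_le_rpow_mul {l x y : ℝ} {f : ℝ[X]} (hl : 0 ≤ l) (hf : jacobiOp c d f = -l • f)
    (hx : 0 ≤ x) (hxy : x ≤ y) (hy : y < 1) :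
    (sonin l f).eval y ≤ ((1 - x) / (1 - y)) ^ (2 * driftBound c d) * (sonin l f).eval x := by
  have hy1 : 0 < 1 - y := sub_pos.mpr hy
  have hanti := antitoneOn_sonin_mul_rpow hl hf ⟨hx, hxy.trans_lt hy⟩ ⟨hx.trans hxy, hy⟩ hxy
  rw [div_rpow (by linarith) hy1.le, div_mul_eq_mul_div, le_div_iff₀ (by positivity)]
  exact hanti.trans_eq (mul_comm _ _)

lemma sonin_mul_rpow_le (hp : IsOrthonormalSeq (jacobiFunctional hc' hd') p)
    (hc : -(1 / 2) ≤ c) (hd : -(1 / 2) ≤ d) (hM : 1 ≤ M) (hKM : driftBound c d ≤ M)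
    (hl : 2 * M ^ 2 ≤ jacobiEigenvalue c d n) {ε : ℝ} (hε : 0 < ε) (hε1 : ε ≤ 1)
    (hx : x ∈ Ico (0 : ℝ) 1) (hεx : ε ≤ jacobiEigenvalue c d n * (1 - x)) :
    (sonin (jacobiEigenvalue c d n) (p n)).eval x *
        (1 - x + 1 / jacobiEigenvalue c d n) ^ (c + 1 / 2) ≤
      12 * exp 2 * 2 ^ (c + 1 / 2) * (M ^ 2 / ε) ^ (2 * driftBound c d) *
        jacobiEigenvalue c d n := by
  set l := jacobiEigenvalue c d n
  have hM2 : 1 ≤ M ^ 2 := one_le_pow₀ hM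
  have hl0 : 0 < l := by linarith
  have hK := driftBound_nonneg c d
  have hratio : 1 ≤ (M ^ 2 / ε) ^ (2 * driftBound c d) :=
    one_le_rpow ((one_le_div hε).mpr (hε1.trans hM2)) (by positivity)
  rcases le_total (M ^ 2) (l * (1 - x)) with hMx | hxM
  · calc _ ≤ 12 * exp 2 * 2 ^ (c + 1 / 2) * l :=
          sonin_mul_rpow_le_of_sq_le hp hc hd hM hKM hl hx hMx
      _ ≤ 12 * exp 2 * 2 ^ (c + 1 / 2) * (M ^ 2 / ε) ^ (2 * driftBound c d) * l := by
        refine mul_le_mul_of_nonneg_right ?_ hl0.le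
        exact le_mul_of_one_le_right (by positivity) hratio
  · obtain ⟨x₀, hx₀⟩ : ∃ x₀, l * (1 - x₀) = M ^ 2 := ⟨1 - M ^ 2 / l, by field_simp; ring⟩
    have h1 : 0 < 1 - x := sub_pos.mpr hx.2
    have hx₀x : x₀ ≤ x := by nlinarith
    have hx₀' : x₀ ∈ Ico (0 : ℝ) 1 := ⟨by nlinarith, hx₀x.trans_lt hx.2⟩
    have hsonin₀ := sonin_nonneg hl0.le (p n) ⟨by linarith [hx₀'.1], hx₀'.2.le⟩
    have hquot : (1 - x₀) / (1 - x) ≤ M ^ 2 / ε := by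
      rw [← hx₀, ← mul_div_mul_left (1 - x₀) (1 - x) hl0.ne']
      gcongr
      rw [hx₀]
      positivity
    have hsonin : (sonin l (p n)).eval x ≤
        (M ^ 2 / ε) ^ (2 * driftBound c d) * (sonin l (p n)).eval x₀ :=
      (eval_sonin_le_rpow_mul hl0.le (hp.jacobiOp_eq n) hx₀'.1 hx₀x hx.2).trans <| by
        have : 0 ≤ (1 - x₀) / (1 - x) := div_nonneg (by linarith) h1.le
        gcongr
    calc _ ≤ (M ^ 2 / ε) ^ (2 * driftBound c d) * (sonin l (p n)).eval x₀ *
          (1 - x₀ + 1 / l) ^ (c + 1 / 2) := by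
          gcongr
          linarith
      _ = (M ^ 2 / ε) ^ (2 * driftBound c d) * ((sonin l (p n)).eval x₀ *
          (1 - x₀ + 1 / l) ^ (c + 1 / 2)) := mul_assoc _ _ _
      _ ≤ (M ^ 2 / ε) ^ (2 * driftBound c d) * (12 * exp 2 * 2 ^ (c + 1 / 2) * l) := by
          refine mul_le_mul_of_nonneg_left ?_ (zero_le_one.trans hratio)
          exact sonin_mul_rpow_le_of_sq_le hp hc hd hM hKM hl hx₀' hx₀.ge
      _ = _ := by ring

lemma exists_sq_mul_rpow_le (hp : IsOrthonormalSeq (jacobiFunctional hc' hd') p)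
    (hc : -(1 / 2) ≤ c) (hd : -(1 / 2) ≤ d) :
    ∃ N B : ℝ, 0 < N ∧ ∀ n, N ≤ jacobiEigenvalue c d n → ∀ x ∈ Icc (0 : ℝ) 1,
      (p n).eval x ^ 2 * (1 - x + 1 / jacobiEigenvalue c d n) ^ (c + 1 / 2) ≤ B := by
  set M := max 1 (driftBound c d)
  have hM : 1 ≤ M := le_max_left _ _
  have hM2 : 1 ≤ M ^ 2 := one_le_pow₀ hM
  have hc1 : 0 < c + 1 := by linarith
  set ε := min 1 ((c + 1) / (2 * 2 ^ |d|))
  have hε : 0 < ε := by positivity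
  have hε1 : ε ≤ 1 := min_le_left _ _
  set B := 12 * exp 2 * 2 ^ (c + 1 / 2) * (M ^ 2 / ε) ^ (2 * driftBound c d)
  refine ⟨2 * M ^ 2, 4 * B, by positivity, fun n hl x hx => ?_⟩
  set l := jacobiEigenvalue c d n
  have hl0 : 0 < l := by linarith
  have hleft : ∀ z ∈ Ico (0 : ℝ) 1, ε ≤ l * (1 - z) →
      (p n).eval z ^ 2 * (1 - z + 1 / l) ^ (c + 1 / 2) ≤ B := fun z hz hεz => by
    have h1 : 0 ≤ 1 - z := sub_nonneg.mpr hz.2.le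
    have hsonin := mul_eval_sq_le_sonin l (p n) ⟨by linarith [hz.1], hz.2.le⟩
    have hbound := sonin_mul_rpow_le hp hc hd hM (le_max_right _ _) hl hε hε1 hz hεz
    refine le_of_mul_le_mul_right ?_ hl0
    calc _ = l * (p n).eval z ^ 2 * (1 - z + 1 / l) ^ (c + 1 / 2) := by ring
      _ ≤ (sonin l (p n)).eval z * (1 - z + 1 / l) ^ (c + 1 / 2) := by gcongr
      _ ≤ _ := hbound
  have hB : 0 ≤ B := by positivity
  rcases le_or_gt ε (l * (1 - x)) with hεx | hxε
  · have hx1 : x < 1 := by nlinarith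
    linarith [hleft x ⟨hx.1, hx1⟩ hεx]
  · obtain ⟨x₁, hx₁⟩ : ∃ x₁, l * (1 - x₁) = ε := ⟨1 - ε / l, by field_simp; ring⟩
    have hx₁x : x₁ ≤ x := by nlinarith
    have hx₁' : x₁ ∈ Ico (0 : ℝ) 1 := ⟨by nlinarith, by nlinarith⟩
    have h1 : 0 ≤ 1 - x := sub_nonneg.mpr hx.2
    have hend := sq_eval_le_four_mul_sq_eval hc' hd' hl0.le (hp.jacobiOp_eq n) hx₁'
      (hx₁.trans_le (min_le_right _ _)) ⟨hx₁x, hx.2⟩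
    calc _ ≤ 4 * (p n).eval x₁ ^ 2 * (1 - x₁ + 1 / l) ^ (c + 1 / 2) := by
          gcongr
          linarith
      _ = 4 * ((p n).eval x₁ ^ 2 * (1 - x₁ + 1 / l) ^ (c + 1 / 2)) := mul_assoc _ _ _
      _ ≤ 4 * B := by gcongr; exact hleft x₁ hx₁' hx₁.ge

end SoninBound

section PointwiseBound

open Polynomial

/-- The scale `√(1 - x) + 1 / (n + 1)` on which polynomials of degree `n` vary near the point `x`
of `[0, 1]`, in the variable `√(1 - x)`. -/
def endpointScale (n : ℕ) (x : ℝ) : ℝ := √(1 - x) + 1 / (n + 1)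

variable {c d x : ℝ} {n : ℕ}

lemma endpointScale_pos (n : ℕ) (x : ℝ) : 0 < endpointScale n x := by
  rw [endpointScale]
  positivity

lemma endpointScale_le_two (n : ℕ) (hx : 0 ≤ x) : endpointScale n x ≤ 2 := by
  have hsqrt : √(1 - x) ≤ 1 := sqrt_le_one.mpr (by linarith)
  have hinv : 1 / ((n : ℝ) + 1) ≤ 1 := div_le_one_of_le₀ (by simp) (by positivity)
  rw [endpointScale]
  linarith

lemma sqrt_le_endpointScale (n : ℕ) (x : ℝ) : √(1 - x) ≤ endpointScale n x :=
  le_add_of_nonneg_right (by positivity)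

lemma Jw_le_sqrt_rpow_mul (c : ℝ) (hd : 0 ≤ d) (hx : x ∈ Icc (-1 : ℝ) 1) :
    Jw c d x ≤ √(1 - x) ^ (2 * c) * 2 ^ d := by
  have h1 : 0 ≤ 1 - x := sub_nonneg.mpr hx.2
  have h2 : (1 + x) ^ d ≤ 2 ^ d := rpow_le_rpow (by linarith [hx.1]) (by linarith [hx.2]) hd
  rw [rpow_mul (sqrt_nonneg _), rpow_two, sq_sqrt h1]
  exact mul_le_mul_of_nonneg_left h2 (rpow_nonneg h1 c)

lemma sq_le_jacobiEigenvalue (hcd : 0 ≤ c + d + 1) (n : ℕ) :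
    (n : ℝ) ^ 2 ≤ jacobiEigenvalue c d n := by
  rw [jacobiEigenvalue]
  nlinarith [mul_nonneg n.cast_nonneg hcd]

lemma jacobiEigenvalue_le (hcd : 0 ≤ c + d + 1) (n : ℕ) :
    jacobiEigenvalue c d n ≤ (c + d + 2) * (n + 1) ^ 2 := by
  have hn : (0 : ℝ) ≤ n := n.cast_nonneg
  rw [jacobiEigenvalue]
  nlinarith [mul_nonneg hn hcd, mul_nonneg (mul_nonneg hn hn) hcd]

lemma endpointScale_sq_le (hcd : 0 ≤ c + d + 1) (hl : 0 < jacobiEigenvalue c d n) (hx : x ≤ 1) :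
    endpointScale n x ^ 2 ≤ 2 * (c + d + 2) * (1 - x + 1 / jacobiEigenvalue c d n) := by
  have h1 : 0 ≤ 1 - x := sub_nonneg.mpr hx
  have hinv : (1 / ((n : ℝ) + 1)) ^ 2 ≤ (c + d + 2) * (1 / jacobiEigenvalue c d n) := by
    rw [div_pow, one_pow, mul_one_div, div_le_div_iff₀ (by positivity) hl, one_mul]
    exact jacobiEigenvalue_le hcd n
  calc endpointScale n x ^ 2 ≤ 2 * (√(1 - x) ^ 2 + (1 / ((n : ℝ) + 1)) ^ 2) := add_sq_le
    _ ≤ 2 * ((c + d + 2) * (1 - x) + (c + d + 2) * (1 / jacobiEigenvalue c d n)) := by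
      rw [sq_sqrt h1]
      gcongr
      exact le_mul_of_one_le_left h1 (by linarith)
    _ = _ := by ring

namespace IsOrthonormalSeq

variable {hc' : -1 < c} {hd' : -1 < d} {p : ℕ → ℝ[X]}

lemma exists_abs_eval_mul_endpointScale_rpow_le_of_le
    (hp : IsOrthonormalSeq (jacobiFunctional hc' hd') p)
    (hc : -(1 / 2) ≤ c) (hd : -(1 / 2) ≤ d) :
    ∃ (N : ℕ) (B : ℝ), ∀ n, N ≤ n → ∀ x ∈ Icc (0 : ℝ) 1,
      |(p n).eval x| * endpointScale n x ^ (c + 1 / 2) ≤ B := by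
  obtain ⟨N, B, hN, hB⟩ := exists_sq_mul_rpow_le hp hc hd
  have hcd : 0 ≤ c + d + 1 := by linarith
  refine ⟨⌈N⌉₊, √((2 * (c + d + 2)) ^ (c + 1 / 2) * B), fun n hn x hx => le_sqrt_of_sq_le ?_⟩
  have hNn : N ≤ jacobiEigenvalue c d n := by
    calc N ≤ n := Nat.ceil_le.mp hn
      _ ≤ (n : ℝ) ^ 2 := by exact_mod_cast Nat.le_self_pow two_ne_zero n
      _ ≤ _ := sq_le_jacobiEigenvalue hcd n
  have hl : 0 < jacobiEigenvalue c d n := hN.trans_le hNn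
  have h1 : 0 ≤ 1 - x := sub_nonneg.mpr hx.2
  have hσ := (endpointScale_pos n x).le
  calc _ = (p n).eval x ^ 2 * (endpointScale n x ^ 2) ^ (c + 1 / 2) := by
        rw [mul_pow, sq_abs, ← rpow_natCast_mul hσ, ← rpow_mul_natCast hσ, mul_comm (c + 1 / 2)]
    _ ≤ (p n).eval x ^ 2 *
        (2 * (c + d + 2) * (1 - x + 1 / jacobiEigenvalue c d n)) ^ (c + 1 / 2) := by
      gcongr
      · linarith
      · exact endpointScale_sq_le hcd hl hx.2
    _ = (2 * (c + d + 2)) ^ (c + 1 / 2) *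
        ((p n).eval x ^ 2 * (1 - x + 1 / jacobiEigenvalue c d n) ^ (c + 1 / 2)) := by
      rw [mul_rpow (by linarith) (by positivity)]
      ring
    _ ≤ _ := by
      have : 0 ≤ c + d + 2 := by linarith
      gcongr
      exact hB n hNn x hx

theorem exists_abs_eval_mul_endpointScale_rpow_le
    (hp : IsOrthonormalSeq (jacobiFunctional hc' hd') p)
    (hc : -(1 / 2) ≤ c) (hd : -(1 / 2) ≤ d) :
    ∃ B, 0 ≤ B ∧ ∀ n, ∀ x ∈ Icc (0 : ℝ) 1,
      |(p n).eval x| * endpointScale n x ^ (c + 1 / 2) ≤ B := by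
  obtain ⟨N, B, hB⟩ := exists_abs_eval_mul_endpointScale_rpow_le_of_le hp hc hd
  have hcompact : ∀ n, ∃ S, ∀ x ∈ Icc (0 : ℝ) 1, |(p n).eval x| ≤ S := fun n =>
    isCompact_Icc.exists_bound_of_continuousOn (p n).continuousOn
  choose S hS using hcompact
  have hS0 : ∀ n, 0 ≤ S n := fun n => (abs_nonneg _).trans (hS n 0 (by simp))
  have hsum : 0 ≤ ∑ k ∈ Finset.range N, S k := Finset.sum_nonneg fun k _ => hS0 k
  refine ⟨max B ((∑ k ∈ Finset.range N, S k) * 2 ^ (c + 1 / 2)), le_max_of_le_right (by positivity),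
    fun n x hx => ?_⟩
  rcases le_or_gt N n with hNn | hnN
  · exact le_max_of_le_left (hB n hNn x hx)
  · refine le_max_of_le_right (mul_le_mul ?_ ?_ ?_ hsum)
    · exact (hS n x hx).trans
        (Finset.single_le_sum (fun k _ => hS0 k) (Finset.mem_range.mpr hnN))
    · exact rpow_le_rpow (endpointScale_pos n x).le (endpointScale_le_two n hx.1) (by linarith)
    · exact rpow_nonneg (endpointScale_pos n x).le _

lemma exists_Jw_mul_abs_eval_le_of_nonneg (hp : IsOrthonormalSeq (jacobiFunctional hc' hd') p)
    (hc : -(1 / 2) ≤ c) (hd : -(1 / 2) ≤ d) :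
    ∃ B, 0 ≤ B ∧ ∀ n, ∀ x ∈ Icc (0 : ℝ) 1,
      Jw (c / 2 + 1 / 4) (d / 2 + 1 / 4) x * |(p n).eval x| ≤ B := by
  obtain ⟨B, hB0, hB⟩ := exists_abs_eval_mul_endpointScale_rpow_le hp hc hd
  refine ⟨2 ^ (d / 2 + 1 / 4) * B, by positivity, fun n x hx => ?_⟩
  have hσ : √(1 - x) ^ (2 * (c / 2 + 1 / 4)) ≤ endpointScale n x ^ (c + 1 / 2) := by
    rw [show 2 * (c / 2 + 1 / 4) = c + 1 / 2 by ring]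
    exact rpow_le_rpow (sqrt_nonneg _) (sqrt_le_endpointScale n x) (by linarith)
  calc _ ≤ √(1 - x) ^ (2 * (c / 2 + 1 / 4)) * 2 ^ (d / 2 + 1 / 4) * |(p n).eval x| := by
        gcongr
        exact Jw_le_sqrt_rpow_mul _ (by linarith) ⟨by linarith [hx.1], hx.2⟩
    _ ≤ endpointScale n x ^ (c + 1 / 2) * 2 ^ (d / 2 + 1 / 4) * |(p n).eval x| := by gcongr
    _ = 2 ^ (d / 2 + 1 / 4) * (|(p n).eval x| * endpointScale n x ^ (c + 1 / 2)) := by ring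
    _ ≤ _ := by gcongr; exact hB n x hx

theorem exists_Jw_mul_abs_eval_le (hp : IsOrthonormalSeq (jacobiFunctional hc' hd') p)
    (hc : -(1 / 2) ≤ c) (hd : -(1 / 2) ≤ d) :
    ∃ B, 0 ≤ B ∧ ∀ n, ∀ x ∈ Icc (-1 : ℝ) 1,
      Jw (c / 2 + 1 / 4) (d / 2 + 1 / 4) x * |(p n).eval x| ≤ B := by
  obtain ⟨B₁, hB₁, hright⟩ := exists_Jw_mul_abs_eval_le_of_nonneg hp hc hd
  obtain ⟨B₂, -, hleft⟩ := exists_Jw_mul_abs_eval_le_of_nonneg hp.comp_neg_X hd hc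
  refine ⟨max B₁ B₂, le_max_of_le_left hB₁, fun n x hx => ?_⟩
  rcases le_total 0 x with h0 | h0
  · exact le_max_of_le_left (hright n x ⟨h0, hx.2⟩)
  · have h := hleft n (-x) ⟨neg_nonneg.mpr h0, neg_le.mp hx.1⟩
    rw [Jw_neg, eval_comp, eval_neg, eval_X, neg_neg] at h
    exact le_max_of_le_right h

end IsOrthonormalSeq

end PointwiseBound

section KernelBound

open Polynomial

variable {c d x y : ℝ}

lemma endpointScale_antitone (x : ℝ) : Antitone fun n => endpointScale n x := fun m n hmn => by
  dsimp only [endpointScale]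
  gcongr

lemma Jw_add_one_half_left (hc : -(1 / 2) ≤ c) (hx : x ≤ 1) :
    Jw ((c + 1) / 2 + 1 / 4) d x = √(1 - x) * Jw (c / 2 + 1 / 4) d x := by
  rw [Jw, Jw, sqrt_eq_rpow, ← mul_assoc, ← rpow_add' (sub_nonneg.mpr hx) (by linarith)]
  ring_nf

lemma abs_sqrt_sub_sqrt_mul_add (hx : x ≤ 1) (hy : y ≤ 1) :
    |√(1 - y) - √(1 - x)| * (√(1 - y) + √(1 - x)) = |x - y| := by
  rw [← abs_of_nonneg (add_nonneg (sqrt_nonneg (1 - y)) (sqrt_nonneg (1 - x))), ← abs_mul,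
    mul_comm, ← sq_sub_sq, sq_sqrt (sub_nonneg.mpr hy), sq_sqrt (sub_nonneg.mpr hx)]
  ring_nf

namespace IsOrthonormalSeq

variable {hc' : -1 < c} {hd' : -1 < d} {p : ℕ → ℝ[X]}

lemma christoffel_jacobiFunctional (hp : IsOrthonormalSeq (jacobiFunctional hc' hd') p) :
    IsOrthonormalSeq (jacobiFunctional (by linarith : -1 < c + 1) hd')
      (christoffelSeq (jacobiFunctional hc' hd') p 1) := by
  rw [← christoffelTransform_jacobiFunctional hc' hd']
  exact hp.christoffel (christoffelTransform_jacobiFunctional_nonneg hc' hd')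

lemma exists_Jw_mul_abs_CDK_le (hp : IsOrthonormalSeq (jacobiFunctional hc' hd') p)
    (hc : -(1 / 2) ≤ c) (hd : -(1 / 2) ≤ d) :
    ∃ B, 0 ≤ B ∧ ∀ n : ℕ, ∀ x ∈ Icc (0 : ℝ) 1, ∀ y ∈ Icc (-1 : ℝ) 1,
      Jw (c / 2 + 1 / 4) (d / 2 + 1 / 4) y * |CDK p n x y| * endpointScale n x ^ (c + 1 / 2)
        ≤ B * (n + 1) := by
  obtain ⟨A, hA0, hA⟩ := hp.exists_abs_eval_mul_endpointScale_rpow_le hc hd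
  obtain ⟨B, hB0, hB⟩ := hp.exists_Jw_mul_abs_eval_le hc hd
  refine ⟨A * B, mul_nonneg hA0 hB0, fun n x hx y hy => ?_⟩
  have hW : 0 ≤ Jw (c / 2 + 1 / 4) (d / 2 + 1 / 4) y := Jw_nonneg hy
  have hσ (k : ℕ) := (endpointScale_pos k x).le
  have hterm : ∀ k ∈ Finset.range (n + 1), Jw (c / 2 + 1 / 4) (d / 2 + 1 / 4) y *
      |(p k).eval x * (p k).eval y| * endpointScale n x ^ (c + 1 / 2) ≤ A * B := fun k hk => by
    have hmono : endpointScale n x ^ (c + 1 / 2) ≤ endpointScale k x ^ (c + 1 / 2) :=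
      rpow_le_rpow (hσ n) (endpointScale_antitone x (Finset.mem_range_succ_iff.mp hk))
        (by linarith)
    calc _ = |(p k).eval x| * endpointScale n x ^ (c + 1 / 2) *
          (Jw (c / 2 + 1 / 4) (d / 2 + 1 / 4) y * |(p k).eval y|) := by rw [abs_mul]; ring
      _ ≤ |(p k).eval x| * endpointScale k x ^ (c + 1 / 2) *
          (Jw (c / 2 + 1 / 4) (d / 2 + 1 / 4) y * |(p k).eval y|) := by gcongr
      _ ≤ A * B := mul_le_mul (hA k x hx) (hB k y hy) (by positivity) hA0
  calc _ ≤ Jw (c / 2 + 1 / 4) (d / 2 + 1 / 4) y *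
        (∑ k ∈ Finset.range (n + 1), |(p k).eval x * (p k).eval y|) *
        endpointScale n x ^ (c + 1 / 2) := by
        have := rpow_nonneg (hσ n) (c + 1 / 2)
        gcongr
        exact Finset.abs_sum_le_sum_abs _ _
    _ ≤ ∑ _k ∈ Finset.range (n + 1), A * B := by
        rw [Finset.mul_sum, Finset.sum_mul]
        exact Finset.sum_le_sum hterm
    _ = A * B * (n + 1) := by simp [mul_comm]

lemma exists_sqrt_mul_abs_eval_christoffelSeq_mul_rpow_le
    (hp : IsOrthonormalSeq (jacobiFunctional hc' hd') p)
    (hd : -(1 / 2) ≤ d) :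
    ∃ B, 0 ≤ B ∧ ∀ n, ∀ x ∈ Icc (0 : ℝ) 1,
      √(1 - x) * |(christoffelSeq (jacobiFunctional hc' hd') p 1 n).eval x| *
        endpointScale n x ^ (c + 1 / 2) ≤ B := by
  obtain ⟨B, hB0, hB⟩ :=
    hp.christoffel_jacobiFunctional.exists_abs_eval_mul_endpointScale_rpow_le (by linarith) hd
  refine ⟨B, hB0, fun n x hx => le_trans ?_ (hB n x hx)⟩
  have hσ := endpointScale_pos n x
  rw [add_right_comm, rpow_add_one hσ.ne', mul_comm √(1 - x), mul_assoc, mul_comm √(1 - x)]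
  gcongr
  exact sqrt_le_endpointScale n x

lemma exists_sqrt_mul_Jw_mul_abs_eval_christoffelSeq_le
    (hp : IsOrthonormalSeq (jacobiFunctional hc' hd') p)
    (hc : -(1 / 2) ≤ c) (hd : -(1 / 2) ≤ d) :
    ∃ B, 0 ≤ B ∧ ∀ n, ∀ x ∈ Icc (-1 : ℝ) 1,
      √(1 - x) * Jw (c / 2 + 1 / 4) (d / 2 + 1 / 4) x *
        |(christoffelSeq (jacobiFunctional hc' hd') p 1 n).eval x| ≤ B := by
  obtain ⟨B, hB0, hB⟩ :=
    hp.christoffel_jacobiFunctional.exists_Jw_mul_abs_eval_le (by linarith) hd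
  exact ⟨B, hB0, fun n x hx => by simpa only [Jw_add_one_half_left hc hx.2] using hB n x hx⟩

lemma exists_abs_sqrt_sub_sqrt_mul_Jw_mul_abs_CDK_le
    (hp : IsOrthonormalSeq (jacobiFunctional hc' hd') p)
    (hc : -(1 / 2) ≤ c) (hd : -(1 / 2) ≤ d) :
    ∃ B, 0 ≤ B ∧ ∀ n, ∀ x ∈ Icc (0 : ℝ) 1, ∀ y ∈ Icc (-1 : ℝ) 1,
      |√(1 - y) - √(1 - x)| * (Jw (c / 2 + 1 / 4) (d / 2 + 1 / 4) y * |CDK p n x y| *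
        endpointScale n x ^ (c + 1 / 2)) ≤ B := by
  obtain ⟨A₁, hA₁0, hA₁⟩ := hp.exists_abs_eval_mul_endpointScale_rpow_le hc hd
  obtain ⟨B₁, hB₁0, hB₁⟩ := hp.exists_Jw_mul_abs_eval_le hc hd
  obtain ⟨A₂, hA₂0, hA₂⟩ := hp.exists_sqrt_mul_abs_eval_christoffelSeq_mul_rpow_le hd
  obtain ⟨B₂, hB₂0, hB₂⟩ := hp.exists_sqrt_mul_Jw_mul_abs_eval_christoffelSeq_le hc hd
  refine ⟨√2 * (A₁ * B₂ + B₁ * A₂), by positivity, fun n x hx y hy => ?_⟩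
  set q := christoffelSeq (jacobiFunctional hc' hd') p 1 n
  set W := Jw (c / 2 + 1 / 4) (d / 2 + 1 / 4) y
  set s := √(1 - x)
  set t := √(1 - y)
  set σ := endpointScale n x ^ (c + 1 / 2)
  have hW : 0 ≤ W := Jw_nonneg hy
  have hσ : 0 ≤ σ := rpow_nonneg (endpointScale_pos n x).le _
  have hs2 : s ^ 2 = 1 - x := sq_sqrt (sub_nonneg.mpr hx.2)
  have ht2 : t ^ 2 = 1 - y := sq_sqrt (sub_nonneg.mpr hy.2)
  rcases (add_nonneg (sqrt_nonneg (1 - y)) (sqrt_nonneg (1 - x))).eq_or_lt with hst | hst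
  · have hts : t - s = 0 := by linarith [sqrt_nonneg (1 - y), sqrt_nonneg (1 - x)]
    rw [hts, abs_zero, zero_mul]
    positivity
  refine le_of_mul_le_mul_left ?_ hst
  have hCDK := hp.abs_sub_mul_abs_CDK_le (christoffelTransform_jacobiFunctional_nonneg hc' hd')
    (hp.christoffelTransform_apply_sq_le n) hx.2 hy.2
  calc (t + s) * (|t - s| * (W * |CDK p n x y| * σ)) = |x - y| * |CDK p n x y| * (W * σ) := by
        rw [← abs_sqrt_sub_sqrt_mul_add hx.2 hy.2]; ring
    _ ≤ √2 * (|(p n).eval x| * ((1 - y) * |q.eval y|) + |(p n).eval y| * ((1 - x) * |q.eval x|)) *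
        (W * σ) := by gcongr
    _ = √2 * (|(p n).eval x| * σ * (t * W * |q.eval y|) * t +
        W * |(p n).eval y| * (s * |q.eval x| * σ) * s) := by rw [← hs2, ← ht2]; ring
    _ ≤ √2 * (A₁ * B₂ * t + B₁ * A₂ * s) := by
        gcongr
        exacts [hA₁ n x hx, hB₂ n y hy, hB₁ n y hy, hA₂ n x hx]
    _ ≤ (t + s) * (√2 * (A₁ * B₂ + B₁ * A₂)) := by
        have h1 : 0 ≤ √2 * (A₁ * B₂) * s := by positivity
        have h2 : 0 ≤ √2 * (B₁ * A₂) * t := by positivity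
        linarith

theorem exists_add_abs_sqrt_sub_sqrt_mul_Jw_mul_abs_CDK_le
    (hp : IsOrthonormalSeq (jacobiFunctional hc' hd') p)
    (hc : -(1 / 2) ≤ c) (hd : -(1 / 2) ≤ d) :
    ∃ B, 0 ≤ B ∧ ∀ n : ℕ, ∀ x ∈ Icc (0 : ℝ) 1, ∀ y ∈ Icc (-1 : ℝ) 1,
      (1 / (n + 1) + |√(1 - y) - √(1 - x)|) * (Jw (c / 2 + 1 / 4) (d / 2 + 1 / 4) y *
        |CDK p n x y| * endpointScale n x ^ (c + 1 / 2)) ≤ B := by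
  obtain ⟨B₁, hB₁0, hdiag⟩ := hp.exists_Jw_mul_abs_CDK_le hc hd
  obtain ⟨B₂, hB₂0, hoff⟩ := hp.exists_abs_sqrt_sub_sqrt_mul_Jw_mul_abs_CDK_le hc hd
  refine ⟨B₁ + B₂, add_nonneg hB₁0 hB₂0, fun n x hx y hy => ?_⟩
  rw [add_mul]
  refine add_le_add ?_ (hoff n x hx y hy)
  rw [one_div, inv_mul_le_iff₀ (by positivity), mul_comm _ B₁]
  exact hdiag n x hx y hy

end IsOrthonormalSeq

end KernelBound

section TrigonometricSubstitution

lemma sqrt_one_sub_cos {θ : ℝ} (hθ0 : 0 ≤ θ) (hθ : θ ≤ 2 * π) :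
    √(1 - cos θ) = √2 * sin (θ / 2) := by
  rw [sin_half_eq_sqrt hθ0 hθ, ← sqrt_mul zero_le_two, mul_div_cancel₀ _ two_ne_zero]

lemma abs_sqrt_one_sub_cos_sub_le {φ θ : ℝ} (hφ : φ ∈ Icc 0 (2 * π)) (hθ : θ ∈ Icc 0 (2 * π)) :
    |√(1 - cos φ) - √(1 - cos θ)| ≤ |φ - θ| := by
  rw [sqrt_one_sub_cos hφ.1 hφ.2, sqrt_one_sub_cos hθ.1 hθ.2, ← mul_sub, abs_mul,
    abs_of_nonneg (sqrt_nonneg 2)]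
  have hsqrt : √2 ≤ 2 := sqrt_le_self_iff.2 (Or.inr one_le_two)
  calc √2 * |sin (φ / 2) - sin (θ / 2)| ≤ 2 * |φ / 2 - θ / 2| :=
        mul_le_mul hsqrt (abs_sin_sub_sin_le _ _) (abs_nonneg _) zero_le_two
    _ = |φ - θ| := by
        rw [← sub_div, abs_div, abs_two, mul_div_cancel₀ _ two_ne_zero]

lemma abs_sub_div_le_abs_sqrt_one_sub_cos_sub {φ θ : ℝ} (hφ : φ ∈ Icc 0 π)
    (hθ : θ ∈ Icc 0 (π / 2)) : |φ - θ| / 16 ≤ |√(1 - cos φ) - √(1 - cos θ)| := by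
  have hπ := pi_pos
  have hcos : 1 / 4 ≤ cos ((φ / 2 + θ / 2) / 2) := by
    have hsum : (φ / 2 + θ / 2) / 2 ≤ 3 * π / 8 := by linarith [hφ.2, hθ.2]
    refine le_trans ?_ (one_sub_mul_le_cos (by linarith [hφ.1, hθ.1]) (by linarith))
    calc (1 / 4 : ℝ) = 1 - 2 / π * (3 * π / 8) := by
          field_simp
          norm_num
      _ ≤ _ := by gcongr
  have hsin : |φ - θ| / 8 ≤ |sin ((φ / 2 - θ / 2) / 2)| := by
    have hdiff : |(φ / 2 - θ / 2) / 2| = |φ - θ| / 4 := by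
      rw [← sub_div, div_div, abs_div]
      norm_num
    have hle : |(φ / 2 - θ / 2) / 2| ≤ π / 2 := by
      rw [abs_le]
      constructor <;> linarith [hφ.1, hφ.2, hθ.1, hθ.2]
    refine le_trans ?_ (mul_abs_le_abs_sin hle)
    rw [hdiff]
    have hpi : 1 / 2 ≤ 2 / π := by
      rw [div_le_div_iff₀ two_pos hπ]
      linarith [pi_le_four]
    calc |φ - θ| / 8 = 1 / 2 * (|φ - θ| / 4) := by ring
      _ ≤ _ := by gcongr
  rw [sqrt_one_sub_cos hφ.1 (by linarith [hφ.2]), sqrt_one_sub_cos hθ.1 (by linarith [hθ.2]),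
    ← mul_sub, sin_sub_sin, abs_mul, abs_mul, abs_mul, abs_two, abs_of_nonneg (sqrt_nonneg 2)]
  calc |φ - θ| / 16 = 1 * (2 * (|φ - θ| / 8) * (1 / 4)) := by ring
    _ ≤ _ := by
        gcongr
        · exact one_le_sqrt.2 one_le_two
        · exact hcos.trans (le_abs_self _)

lemma rpow_sub_one_le_mul_rpow_sub_one {z Z K δ : ℝ} (hz : 0 < z) (hzZ : z ≤ Z) (hZ : Z ≤ K * z)
    (hδ : 0 ≤ δ) : z ^ (δ - 1) ≤ K * Z ^ (δ - 1) := by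
  have hZ0 := hz.trans_le hzZ
  rw [rpow_sub_one hz.ne', rpow_sub_one hZ0.ne', ← mul_div_assoc, div_le_div_iff₀ hz hZ0]
  calc z ^ δ * Z ≤ Z ^ δ * (K * z) := by gcongr
    _ = K * Z ^ δ * z := by ring

lemma integral_Icc_eq_integral_cos (F : ℝ → ℝ) :
    ∫ y in Icc (-1 : ℝ) 1, F y = ∫ φ in 0..π, F (cos φ) * sin φ := by
  have hsubst : ∫ φ in 0..π, (F ∘ cos) φ * -sin φ = ∫ y in cos 0..cos π, F y :=
    intervalIntegral.integral_comp_mul_deriv_of_deriv_nonpos continuous_cos.continuousOn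
      (fun φ _ => hasDerivAt_cos φ) fun φ hφ => by
        rw [min_eq_left pi_pos.le, max_eq_right pi_pos.le] at hφ
        exact neg_nonpos.2 (sin_nonneg_of_mem_Icc (Ioo_subset_Icc_self hφ))
  rw [cos_zero, cos_pi, intervalIntegral.integral_symm (-1)] at hsubst
  rw [integral_Icc_eq_integral_Ioc, ← intervalIntegral.integral_of_le (by norm_num),
    ← neg_inj, ← hsubst, ← intervalIntegral.integral_neg]
  simp only [Function.comp_apply, mul_neg]

lemma integral_abs_sub_comp_le {f : ℝ → ℝ} {θ T : ℝ} (hθ : θ ∈ Icc 0 T)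
    (hf : ContinuousOn f (Icc 0 T)) (hf0 : ∀ v ∈ Icc 0 T, 0 ≤ f v) :
    ∫ φ in 0..T, f |φ - θ| ≤ 2 * ∫ v in 0..T, f v := by
  have hmono : ∀ w ∈ Icc 0 T, ∫ v in 0..w, f v ≤ ∫ v in 0..T, f v := fun w hw => by
    have hT := hw.1.trans hw.2
    refine intervalIntegral.integral_mono_interval le_rfl hw.1 hw.2 ?_
      (hf.intervalIntegrable_of_Icc hT)
    filter_upwards [ae_restrict_mem measurableSet_Ioc] with v hv
    exact hf0 v (Ioc_subset_Icc_self hv)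
  have hleft : ∫ φ in 0..θ, f |φ - θ| = ∫ v in 0..θ, f v := by
    have hshift := intervalIntegral.integral_comp_sub_left (a := 0) (b := θ) f θ
    rw [sub_self, sub_zero] at hshift
    rw [← hshift]
    refine intervalIntegral.integral_congr fun φ hφ => ?_
    rw [uIcc_of_le hθ.1] at hφ
    simp only [abs_sub_comm φ, abs_of_nonneg (sub_nonneg.2 hφ.2)]
  have hright : ∫ φ in θ..T, f |φ - θ| = ∫ v in 0..(T - θ), f v := by
    rw [← sub_self θ, ← intervalIntegral.integral_comp_sub_right f θ]
    refine intervalIntegral.integral_congr fun φ hφ => ?_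
    rw [uIcc_of_le hθ.2] at hφ
    simp only [abs_of_nonneg (sub_nonneg.2 hφ.1)]
  have hcont : ContinuousOn (fun φ => f |φ - θ|) (Icc 0 T) :=
    hf.comp (by fun_prop) fun φ hφ =>
      ⟨abs_nonneg _, abs_sub_le_of_nonneg_of_le hφ.1 hφ.2 hθ.1 hθ.2⟩
  have hint0 := (hcont.mono (Icc_subset_Icc_right hθ.2)).intervalIntegrable_of_Icc
    (μ := volume) hθ.1
  have hint1 := (hcont.mono (Icc_subset_Icc_left hθ.1)).intervalIntegrable_of_Icc
    (μ := volume) hθ.2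
  rw [← intervalIntegral.integral_add_adjacent_intervals hint0 hint1, hleft, hright, two_mul]
  gcongr
  · exact hmono θ hθ
  · exact hmono _ ⟨sub_nonneg.2 hθ.2, by linarith [hθ.1]⟩

lemma integral_add_rpow_neg_one_le {h : ℝ} (hh : 0 < h) (hh1 : h ≤ 1) :
    ∫ v in 0..π, (h + v) ^ (-1 : ℝ) ≤ log (5 / h) := by
  simp only [rpow_neg_one]
  rw [intervalIntegral.integral_comp_add_left (fun v => v⁻¹), add_zero,
    integral_inv_of_pos hh (by linarith [pi_pos])]
  gcongr
  linarith [pi_le_four]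

lemma integral_add_rpow_sub_one_le {h δ : ℝ} (hδ : 0 < δ) (hh : 0 < h) (hh1 : h ≤ 1) :
    ∫ v in 0..π, (h + v) ^ (δ - 1) ≤ 5 ^ δ / δ := by
  rw [intervalIntegral.integral_comp_add_left (fun v => v ^ (δ - 1)), add_zero,
    integral_rpow (Or.inl (by linarith)), sub_add_cancel]
  gcongr
  calc (h + π) ^ δ - h ^ δ ≤ (h + π) ^ δ := sub_le_self _ (by positivity)
    _ ≤ 5 ^ δ := by
        gcongr
        linarith [pi_le_four]

lemma exists_rpow_mul_integral_rpow_sub_one_le {δ : ℝ} (hδ : 0 ≤ δ) :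
    ∃ C, 0 ≤ C ∧ ∀ n : ℕ,
      (n + 1 : ℝ) ^ δ * ∫ v in 0..π, (1 / ((n : ℝ) + 1) + v) ^ (δ - 1) ≤
        C * ((n + 1) ^ δ + log (5 * (n + 1))) := by
  have hh1 : ∀ n : ℕ, 1 / ((n : ℝ) + 1) ≤ 1 := fun n => by
    rw [div_le_one (by positivity)]
    linarith [n.cast_nonneg (α := ℝ)]
  have hlog : ∀ n : ℕ, 0 ≤ log (5 * ((n : ℝ) + 1)) := fun n =>
    log_nonneg (by linarith [n.cast_nonneg (α := ℝ)])
  rcases hδ.eq_or_lt with rfl | hδ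
  · refine ⟨1, zero_le_one, fun n => ?_⟩
    have hint := integral_add_rpow_neg_one_le (h := 1 / ((n : ℝ) + 1)) (by positivity) (hh1 n)
    rw [div_div_eq_mul_div, div_one] at hint
    simp only [rpow_zero, zero_sub, one_mul]
    linarith
  · refine ⟨5 ^ δ / δ, by positivity, fun n => ?_⟩
    have hint := integral_add_rpow_sub_one_le hδ (h := 1 / ((n : ℝ) + 1)) (by positivity) (hh1 n)
    calc _ ≤ (n + 1 : ℝ) ^ δ * (5 ^ δ / δ) := by gcongr
      _ = 5 ^ δ / δ * (n + 1) ^ δ := mul_comm _ _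
      _ ≤ _ := by
          gcongr
          exact le_add_of_nonneg_right (hlog n)

end TrigonometricSubstitution

section LebesgueFunction

variable {α β i j x y : ℝ} {n : ℕ}

lemma Jw_mul_Jw_mul_sqrt (α β i j : ℝ) (hy : y ∈ Ioo (-1 : ℝ) 1) :
    Jw (i / 2) (j / 2) y * Jw α β y * √(1 - y ^ 2) =
      Jw ((i + α) / 2 + 1 / 4) ((j + β) / 2 + 1 / 4) y * Jw (α / 2 + 1 / 4) (β / 2 + 1 / 4) y := by
  have hsqrt : √(1 - y ^ 2) = Jw (1 / 2) (1 / 2) y := by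
    rw [Jw, ← mul_rpow (by linarith [hy.2]) (by linarith [hy.1]), sqrt_eq_rpow]
    ring_nf
  rw [hsqrt, Jw_mul_Jw hy, Jw_mul_Jw hy, Jw_mul_Jw hy]
  ring_nf

lemma sqrt_one_sub_le_mul_endpointScale (n : ℕ) (x y : ℝ) :
    √(1 - y) ≤
      2 * (n + 1) * (1 / (n + 1) + |√(1 - y) - √(1 - x)|) * endpointScale n x := by
  have hN : (0 : ℝ) < n + 1 := by positivity
  have hdist : √(1 - y) ≤ √(1 - x) + |√(1 - y) - √(1 - x)| := by
    linarith [le_abs_self (√(1 - y) - √(1 - x))]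
  have hσ : 1 ≤ (n + 1) * endpointScale n x := by
    rw [endpointScale, mul_add, mul_one_div_cancel hN.ne']
    exact le_add_of_nonneg_left (by positivity)
  have hscale := sqrt_le_endpointScale n x
  have hσ0 := endpointScale_pos n x
  calc √(1 - y) ≤ 2 * (endpointScale n x +
        |√(1 - y) - √(1 - x)| * ((n + 1) * endpointScale n x)) := by
        linarith [abs_nonneg (√(1 - y) - √(1 - x)),
          le_mul_of_one_le_right (abs_nonneg (√(1 - y) - √(1 - x))) hσ]
    _ = _ := by field_simp

lemma Jw_half_le_endpointScale_rpow_mul (n : ℕ) (hi : 0 ≤ i) (hj : 0 ≤ j)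
    (hx : x ∈ Icc (0 : ℝ) 1) :
    Jw (i / 2) (j / 2) x ≤ endpointScale n x ^ i * 2 ^ (j / 2) := by
  refine (Jw_le_sqrt_rpow_mul _ (by positivity) ⟨by linarith [hx.1], hx.2⟩).trans ?_
  rw [mul_div_cancel₀ i two_ne_zero]
  gcongr
  exact sqrt_le_endpointScale n x

lemma Jw_half_add_quarter_le_rpow_mul (n : ℕ) (hα : -(1 / 2) ≤ α) (hβ : -(1 / 2) ≤ β) (x : ℝ)
    (hy : y ∈ Icc (-1 : ℝ) 1) :
    Jw (α / 2 + 1 / 4) (β / 2 + 1 / 4) y ≤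
      (2 * (n + 1) * (1 / (n + 1) + |√(1 - y) - √(1 - x)|) * endpointScale n x) ^ (α + 1 / 2) *
        2 ^ (β / 2 + 1 / 4) := by
  refine (Jw_le_sqrt_rpow_mul _ (by linarith) hy).trans ?_
  rw [show 2 * (α / 2 + 1 / 4) = α + 1 / 2 by ring]
  gcongr
  · linarith
  · exact sqrt_one_sub_le_mul_endpointScale n x y

theorem exists_Jw_mul_abs_CDK_mul_Jw_mul_sqrt_le (hα : -(1 / 2) ≤ α) (hβ : -(1 / 2) ≤ β)
    (hi : 0 ≤ i) (hj : 0 ≤ j) {hc : -1 < i + α} {hd : -1 < j + β} {p : ℕ → Polynomial ℝ}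
    (hp : IsOrthonormalSeq (jacobiFunctional hc hd) p) :
    ∃ B, 0 ≤ B ∧ ∀ n : ℕ, ∀ x ∈ Icc (0 : ℝ) 1, ∀ y ∈ Ioo (-1 : ℝ) 1,
      Jw (i / 2) (j / 2) x * (|CDK p n x y| * Jw (i / 2) (j / 2) y * Jw α β y) * √(1 - y ^ 2) ≤
        B * ((n + 1) ^ (α + 1 / 2) *
          (1 / (n + 1) + |√(1 - y) - √(1 - x)|) ^ (α + 1 / 2 - 1)) := by
  obtain ⟨B, hB0, hB⟩ :=
    hp.exists_add_abs_sqrt_sub_sqrt_mul_Jw_mul_abs_CDK_le (by linarith) (by linarith)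
  refine ⟨2 ^ (j / 2) * 2 ^ (β / 2 + 1 / 4) * 2 ^ (α + 1 / 2) * B, by positivity,
    fun n x hx y hy => ?_⟩
  have hyI := Ioo_subset_Icc_self hy
  have hkernel := hB n x hx y hyI
  have hσ0 := endpointScale_pos n x
  have hN : (0 : ℝ) ≤ 2 * (n + 1) := by positivity
  have hV : 0 ≤ Jw (α / 2 + 1 / 4) (β / 2 + 1 / 4) y := Jw_nonneg hyI
  have hW : 0 ≤ Jw ((i + α) / 2 + 1 / 4) ((j + β) / 2 + 1 / 4) y := Jw_nonneg hyI
  have hz : 0 < 1 / ((n : ℝ) + 1) + |√(1 - y) - √(1 - x)| := by positivity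
  set W := Jw ((i + α) / 2 + 1 / 4) ((j + β) / 2 + 1 / 4) y
  set σ := endpointScale n x
  set z := 1 / ((n : ℝ) + 1) + |√(1 - y) - √(1 - x)|
  have hxσ := Jw_half_le_endpointScale_rpow_mul n hi hj hx
  have hyσ : Jw (α / 2 + 1 / 4) (β / 2 + 1 / 4) y ≤
      (2 * (n + 1) * z * σ) ^ (α + 1 / 2) * 2 ^ (β / 2 + 1 / 4) :=
    Jw_half_add_quarter_le_rpow_mul n hα hβ x hyI
  refine le_of_mul_le_mul_left ?_ hz
  calc _ = z * (Jw (i / 2) (j / 2) x * |CDK p n x y| *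
        (Jw (i / 2) (j / 2) y * Jw α β y * √(1 - y ^ 2))) := by ring
    _ = z * (Jw (i / 2) (j / 2) x * |CDK p n x y| *
        (W * Jw (α / 2 + 1 / 4) (β / 2 + 1 / 4) y)) := by rw [Jw_mul_Jw_mul_sqrt α β i j hy]
    _ ≤ z * (σ ^ i * 2 ^ (j / 2) * |CDK p n x y| *
        (W * ((2 * (n + 1) * z * σ) ^ (α + 1 / 2) * 2 ^ (β / 2 + 1 / 4)))) := by gcongr
    _ = 2 ^ (j / 2) * 2 ^ (β / 2 + 1 / 4) * 2 ^ (α + 1 / 2) *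
        (z * (W * |CDK p n x y| * σ ^ (i + α + 1 / 2))) *
        ((n + 1) ^ (α + 1 / 2) * z ^ (α + 1 / 2)) := by
      rw [mul_rpow (by positivity) hσ0.le, mul_rpow hN hz.le, mul_rpow zero_le_two (by positivity),
        add_assoc i α, rpow_add hσ0 i (α + 1 / 2)]
      generalize α + 1 / 2 = δ
      ring
    _ ≤ 2 ^ (j / 2) * 2 ^ (β / 2 + 1 / 4) * 2 ^ (α + 1 / 2) * B *
        ((n + 1) ^ (α + 1 / 2) * z ^ (α + 1 / 2)) := by gcongr
    _ = _ := by
      rw [rpow_sub_one hz.ne']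
      field_simp

/-- The Lebesgue function at `x` of the operator `s_n^{i,j}` for the Jacobi weight `w_{α,β}`; its
supremum over `[-1, 1]` is the Lebesgue constant. -/
def lebesgueFunction (α β i j : ℝ) (p : ℕ → Polynomial ℝ) (n : ℕ) (x : ℝ) : ℝ :=
  Jw (i / 2) (j / 2) x * ∫ y in Icc (-1 : ℝ) 1, |CDK p n x y| * Jw (i / 2) (j / 2) y * Jw α β y

lemma exists_Jw_mul_abs_CDK_cos_mul_sin_le (hα : -(1 / 2) ≤ α) (hβ : -(1 / 2) ≤ β)
    (hi : 0 ≤ i) (hj : 0 ≤ j) {hc : -1 < i + α} {hd : -1 < j + β} {p : ℕ → Polynomial ℝ}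
    (hp : IsOrthonormalSeq (jacobiFunctional hc hd) p) :
    ∃ B, 0 ≤ B ∧ ∀ n : ℕ, ∀ θ ∈ Icc 0 (π / 2), ∀ φ ∈ Ioo 0 π,
      Jw (i / 2) (j / 2) (cos θ) *
          (|CDK p n (cos θ) (cos φ)| * Jw (i / 2) (j / 2) (cos φ) * Jw α β (cos φ)) * sin φ ≤
        B * ((n + 1) ^ (α + 1 / 2) * (1 / (n + 1) + |φ - θ|) ^ (α + 1 / 2 - 1)) := by
  obtain ⟨B, hB0, hB⟩ := exists_Jw_mul_abs_CDK_mul_Jw_mul_sqrt_le hα hβ hi hj hp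
  refine ⟨B * 16, by positivity, fun n θ hθ φ hφ => ?_⟩
  have hπ := pi_pos
  have hφI := Ioo_subset_Icc_self hφ
  have hcosθ : cos θ ∈ Icc (0 : ℝ) 1 :=
    ⟨cos_nonneg_of_mem_Icc ⟨by linarith [hθ.1], hθ.2⟩, cos_le_one θ⟩
  have hcosφ : cos φ ∈ Ioo (-1 : ℝ) 1 := by
    constructor
    · rw [← cos_pi]
      exact cos_lt_cos_of_nonneg_of_le_pi hφ.1.le le_rfl hφ.2
    · rw [← cos_zero]
      exact cos_lt_cos_of_nonneg_of_le_pi le_rfl hφ.2.le hφ.1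
  have hsin : √(1 - cos φ ^ 2) = sin φ := by
    rw [← sin_sq, sqrt_sq (sin_nonneg_of_mem_Icc hφI)]
  have hbound := hB n (cos θ) hcosθ (cos φ) hcosφ
  rw [hsin] at hbound
  refine hbound.trans ?_
  rw [mul_assoc B, mul_left_comm 16]
  gcongr
  have hh : (0 : ℝ) < 1 / (n + 1) := by positivity
  refine rpow_sub_one_le_mul_rpow_sub_one (by positivity) ?_ ?_ (by linarith)
  · exact add_le_add_right (abs_sqrt_one_sub_cos_sub_le ⟨hφ.1.le, by linarith [hφ.2]⟩
      ⟨hθ.1, by linarith [hθ.2]⟩) _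
  · linarith [abs_sub_div_le_abs_sqrt_one_sub_cos_sub hφI hθ]

lemma lebesgueFunction_cos_le {p : ℕ → Polynomial ℝ} {f : ℝ → ℝ} {θ : ℝ} (hf : Continuous f)
    (h : ∀ φ ∈ Ioo 0 π, Jw (i / 2) (j / 2) (cos θ) *
      (|CDK p n (cos θ) (cos φ)| * Jw (i / 2) (j / 2) (cos φ) * Jw α β (cos φ)) * sin φ ≤ f φ) :
    lebesgueFunction α β i j p n (cos θ) ≤ ∫ φ in 0..π, f φ := by
  rw [lebesgueFunction, ← integral_const_mul, integral_Icc_eq_integral_cos,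
    intervalIntegral.integral_of_le pi_pos.le, intervalIntegral.integral_of_le pi_pos.le,
    integral_Ioc_eq_integral_Ioo, integral_Ioc_eq_integral_Ioo]
  refine integral_mono_of_nonneg ?_ (hf.integrableOn_Icc.mono_set Ioo_subset_Icc_self) ?_
  · filter_upwards [ae_restrict_mem measurableSet_Ioo] with φ hφ
    have hJw : ∀ (a b ψ : ℝ), 0 ≤ Jw a b (cos ψ) := fun _ _ ψ =>
      Jw_nonneg ⟨neg_one_le_cos ψ, cos_le_one ψ⟩
    exact mul_nonneg (mul_nonneg (hJw _ _ _) (mul_nonneg (mul_nonneg (abs_nonneg _) (hJw _ _ _))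
      (hJw _ _ _))) (sin_nonneg_of_mem_Icc (Ioo_subset_Icc_self hφ))
  · filter_upwards [ae_restrict_mem measurableSet_Ioo] with φ hφ using h φ hφ

lemma exists_lebesgueFunction_le_of_nonneg (hα : -(1 / 2) ≤ α) (hβ : -(1 / 2) ≤ β)
    (hi : 0 ≤ i) (hj : 0 ≤ j) {hc : -1 < i + α} {hd : -1 < j + β} {p : ℕ → Polynomial ℝ}
    (hp : IsOrthonormalSeq (jacobiFunctional hc hd) p) :
    ∃ B, 0 ≤ B ∧ ∀ n : ℕ, ∀ x ∈ Icc (0 : ℝ) 1,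
      lebesgueFunction α β i j p n x ≤ B * ((n + 1) ^ (α + 1 / 2) + log (5 * (n + 1))) := by
  obtain ⟨B, hB0, hB⟩ := exists_Jw_mul_abs_CDK_cos_mul_sin_le hα hβ hi hj hp
  obtain ⟨C, hC0, hC⟩ := exists_rpow_mul_integral_rpow_sub_one_le (δ := α + 1 / 2) (by linarith)
  refine ⟨B * (2 * C), by positivity, fun n x hx => ?_⟩
  have hθ : arccos x ∈ Icc 0 (π / 2) := ⟨arccos_nonneg x, arccos_le_pi_div_two.2 hx.1⟩
  have hcos : cos (arccos x) = x := cos_arccos (by linarith [hx.1]) hx.2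
  set θ := arccos x
  have hh : (0 : ℝ) < 1 / (n + 1) := by positivity
  have hcont : ContinuousOn (fun v => (1 / ((n : ℝ) + 1) + v) ^ (α + 1 / 2 - 1)) (Icc 0 π) :=
    ContinuousOn.rpow_const (by fun_prop) fun v hv => Or.inl (by linarith [hv.1])
  have hcont' : Continuous fun φ => (1 / ((n : ℝ) + 1) + |φ - θ|) ^ (α + 1 / 2 - 1) :=
    Continuous.rpow_const (by fun_prop) fun φ => Or.inl (by positivity)
  have hfold := integral_abs_sub_comp_le ⟨hθ.1, hθ.2.trans (by linarith [pi_pos])⟩ hcont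
    fun v hv => rpow_nonneg (by linarith [hv.1]) _
  rw [← hcos]
  calc _ ≤ ∫ φ in 0..π,
        B * ((n + 1) ^ (α + 1 / 2) * (1 / (n + 1) + |φ - θ|) ^ (α + 1 / 2 - 1)) :=
        lebesgueFunction_cos_le (hcont'.const_mul _ |>.const_mul _) (hB n θ hθ)
    _ = B * ((n + 1) ^ (α + 1 / 2) *
        ∫ φ in 0..π, (1 / ((n : ℝ) + 1) + |φ - θ|) ^ (α + 1 / 2 - 1)) := by
        rw [intervalIntegral.integral_const_mul, intervalIntegral.integral_const_mul]
    _ ≤ B * ((n + 1) ^ (α + 1 / 2) *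
        (2 * ∫ v in 0..π, (1 / ((n : ℝ) + 1) + v) ^ (α + 1 / 2 - 1))) := by gcongr
    _ = B * (2 * ((n + 1) ^ (α + 1 / 2) *
        ∫ v in 0..π, (1 / ((n : ℝ) + 1) + v) ^ (α + 1 / 2 - 1))) := by ring
    _ ≤ B * (2 * (C * ((n + 1) ^ (α + 1 / 2) + log (5 * (n + 1))))) :=
        mul_le_mul_of_nonneg_left (mul_le_mul_of_nonneg_left (hC n) zero_le_two) hB0
    _ = _ := by ring

lemma lebesgueFunction_comp_neg (α β i j : ℝ) (p : ℕ → Polynomial ℝ) (n : ℕ) (x : ℝ) :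
    lebesgueFunction β α j i (fun k => (p k).comp (-Polynomial.X)) n (-x) =
      lebesgueFunction α β i j p n x := by
  have hCDK : ∀ y, CDK (fun k => (p k).comp (-Polynomial.X)) n (-x) y = CDK p n x (-y) :=
    fun y => by simp [CDK]
  simp only [lebesgueFunction, hCDK, Jw_neg]
  rw [integral_Icc_eq_integral_Ioc, integral_Icc_eq_integral_Ioc,
    ← intervalIntegral.integral_of_le (by norm_num),
    ← intervalIntegral.integral_of_le (by norm_num)]
  have hneg := intervalIntegral.integral_comp_neg (a := -1) (b := 1)
    fun y => |CDK p n x y| * Jw (i / 2) (j / 2) y * Jw α β y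
  simp only [Jw_neg, neg_neg] at hneg
  rw [hneg]

theorem exists_lebesgueFunction_le (hα : -(1 / 2) ≤ α) (hβ : -(1 / 2) ≤ β)
    (hi : 0 ≤ i) (hj : 0 ≤ j) {hc : -1 < i + α} {hd : -1 < j + β} {p : ℕ → Polynomial ℝ}
    (hp : IsOrthonormalSeq (jacobiFunctional hc hd) p) :
    ∃ B, 0 < B ∧ ∀ n : ℕ, ∀ x ∈ Icc (-1 : ℝ) 1,
      lebesgueFunction α β i j p n x ≤
        B * ((n + 1) ^ (max α β + 1 / 2) + log (5 * (n + 1))) := by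
  obtain ⟨B, hB0, hB⟩ := exists_lebesgueFunction_le_of_nonneg hα hβ hi hj hp
  obtain ⟨C, hC0, hC⟩ := exists_lebesgueFunction_le_of_nonneg hβ hα hj hi hp.comp_neg_X
  refine ⟨B + C + 1, by positivity, fun n x hx => ?_⟩
  have hn : (1 : ℝ) ≤ n + 1 := le_add_of_nonneg_left n.cast_nonneg
  have hlog : 0 ≤ log (5 * ((n : ℝ) + 1)) := log_nonneg (by linarith)
  rcases le_total 0 x with hx0 | hx0
  · refine (hB n x ⟨hx0, hx.2⟩).trans ?_
    gcongr
    · linarith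
    · exact le_max_left α β
  · rw [← lebesgueFunction_comp_neg]
    refine (hC n (-x) ⟨by linarith, by linarith [hx.1]⟩).trans ?_
    gcongr
    · linarith
    · exact le_max_right α β

lemma one_add_log_le_mul_log (hn : 2 ≤ n) : 1 + log (5 * (n + 1)) ≤ 6 * log n := by
  have hn2 : (2 : ℝ) ≤ n := mod_cast hn
  have hlog2 : log 2 ≤ log n := log_le_log two_pos hn2
  have hpow : 5 * ((n : ℝ) + 1) ≤ (n : ℝ) ^ 4 := by
    have hcube : (2 : ℝ) ^ 3 ≤ (n : ℝ) ^ 3 := by gcongr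
    nlinarith
  have hlog := log_le_log (by positivity) hpow
  rw [log_pow] at hlog
  push_cast at hlog
  linarith [log_two_gt_d9]

lemma rpow_add_log_le_mul_rpow {δ : ℝ} (hδ : 0 < δ) (hn : 1 ≤ n) :
    (n + 1 : ℝ) ^ δ + log (5 * (n + 1)) ≤ (2 ^ δ + 10 ^ δ / δ) * n ^ δ := by
  have hn1 : (1 : ℝ) ≤ n := mod_cast hn
  have hpow : (n + 1 : ℝ) ^ δ ≤ 2 ^ δ * n ^ δ := by
    rw [← mul_rpow zero_le_two n.cast_nonneg]
    gcongr
    linarith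
  have hlog : log (5 * ((n : ℝ) + 1)) ≤ 10 ^ δ / δ * n ^ δ :=
    calc log (5 * ((n : ℝ) + 1)) ≤ log (10 * n) :=
          log_le_log (by positivity) (by linarith)
      _ ≤ (10 * (n : ℝ)) ^ δ / δ := log_le_rpow_div (by positivity) hδ
      _ = 10 ^ δ / δ * n ^ δ := by
          rw [mul_rpow (by norm_num) n.cast_nonneg]
          ring
  linarith

end LebesgueFunction

/-- order of the Lebesgue constants of the operators
`s_n^{(α,β),i,j}`, stated as a uniform bound on the Lebesgue function. -/
theorem stmt_14
    (α β : ℝ) (hα : -(1/2 : ℝ) ≤ α) (hβ : -(1/2 : ℝ) ≤ β)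
    (i j : ℝ) (hi : 0 ≤ i) (hj : 0 ≤ j)
    (p : ℕ → Polynomial ℝ)
    (hp : IsONPS (fun x => Jw i j x * Jw α β x) p) :
    ((-(1/2 : ℝ) < max α β →
      ∃ c : ℝ, 0 < c ∧ ∀ n : ℕ, 1 ≤ n → ∀ x ∈ Icc (-1:ℝ) 1,
        Jw (i/2) (j/2) x *
          (∫ y in Icc (-1:ℝ) 1, |CDK p n x y| * Jw (i/2) (j/2) y * Jw α β y)
          ≤ c * (n:ℝ) ^ (max α β + 1/2)) ∧
     (α = -(1/2 : ℝ) → β = -(1/2 : ℝ) →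
      ∃ c : ℝ, 0 < c ∧ ∀ n : ℕ, 2 ≤ n → ∀ x ∈ Icc (-1:ℝ) 1,
        Jw (i/2) (j/2) x *
          (∫ y in Icc (-1:ℝ) 1, |CDK p n x y| * Jw (i/2) (j/2) y * Jw α β y)
          ≤ c * Real.log n)) := by
  obtain ⟨B, hB0, hB⟩ := exists_lebesgueFunction_le hα hβ hi hj
    (hp.isOrthonormalSeq (by linarith) (by linarith))
  refine ⟨fun hM => ?_, fun hα' hβ' => ?_⟩
  · have hδ : 0 < max α β + 1 / 2 := by linarith
    refine ⟨B * (2 ^ (max α β + 1 / 2) + 10 ^ (max α β + 1 / 2) / (max α β + 1 / 2)),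
      by positivity, fun n hn x hx => (hB n x hx).trans ?_⟩
    rw [mul_assoc]
    exact mul_le_mul_of_nonneg_left (rpow_add_log_le_mul_rpow hδ hn) hB0.le
  · have hδ : max α β + 1 / 2 = 0 := by rw [hα', hβ', max_self, neg_add_cancel]
    refine ⟨B * 6, by positivity, fun n hn x hx => (hB n x hx).trans ?_⟩
    rw [hδ, rpow_zero, mul_assoc]
    exact mul_le_mul_of_nonneg_left (one_add_log_le_mul_log hn) hB0.le
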